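/- Let N ≥ 1 and p > 1, and set β = 1/(p−1) and q* = N(p−1)/2. Let φ ∈ C²(ℝ^N) be a nontrivial bounded classical solution of the profile equation Δφ − (y/2)·∇φ + |φ|^{p−1}φ − βφ = 0 on ℝ^N. Then φ does not belong to L^{q*}(ℝ^N), i.e. ∫_{ℝ^N} |φ(y)|^{q*} dy = ∞. -/

import Mathlib

open MeasureTheory Filter Set Metric
open scoped ENNReal Topology

noncomputable section

/-- The Laplacian of `f : ℝ^N → ℝ`, as the sum of second partial derivatives. -/
def lap {N : ℕ} (f : EuclideanSpace ℝ (Fin N) → ℝ) (x : EuclideanSpace ℝ (Fin N)) : ℝ :=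
  ∑ i, fderiv ℝ (fun y => fderiv ℝ f y (EuclideanSpace.single i 1)) x (EuclideanSpace.single i 1)

/-! Suppose `φ` lies in the critical space `L^q`, where `q = N (p - 1) / 2`. Doubling the variables
and reflecting one of them shows that `φ` is Lipschitz, so that `φ → 0` at infinity, and comparison
with a radial barrier improves this to `φ = O(|y| ^ (-2 / (p - 1)))`. In the logarithmic radius
`t = log |y|` the rescaled function `ψ = |y| ^ (2 / (p - 1)) φ` then solves an equation on the
cylinder `ℝ × S^(N-1)` with a bounded potential and a drift of size `exp (2 * t) / 2`. If `φ`
vanishes on a large sphere, it vanishes outside by the maximum principle, hence everywhere by unique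
continuation; otherwise the frequency function of `ψ` shows that `∫ ψ²` over the spheres stays
bounded below. As `ψ` is bounded, so does `∫ |ψ| ^ q`, and `∫ |φ| ^ q` diverges like `∫ dr / r`. -/

open Module InnerProductSpace Laplacian Gradient
open scoped RealInnerProductSpace

theorem secondDeriv_nonpos_of_isLocalMax {g g' : ℝ → ℝ} {g'' a : ℝ} (hmax : IsLocalMax g a)
    (hg : ∀ᶠ t in 𝓝 a, HasDerivAt g (g' t) t) (hg' : HasDerivAt g' g'' a) : g'' ≤ 0 := by
  by_contra! hpos
  have hderiv : deriv g =ᶠ[𝓝 a] g' := hg.mono fun t ht ↦ ht.deriv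
  have hsecond : deriv (deriv g) a = g'' := (hg'.congr_of_eventuallyEq hderiv).deriv
  have hmin : IsLocalMin g a := isLocalMin_of_deriv_deriv_pos (hsecond.symm ▸ hpos)
    hmax.deriv_eq_zero hg.self_of_nhds.continuousAt
  have hconst : g =ᶠ[𝓝 a] fun _ ↦ g a := by
    filter_upwards [hmax, hmin] with t h₁ h₂ using le_antisymm h₁ h₂
  have hzero : deriv (deriv g) a = 0 := by
    rw [hconst.deriv.deriv_eq]
    simp
  exact hpos.ne' (hsecond ▸ hzero)

section LineDerivatives

variable {E F : Type*} [NormedAddCommGroup E] [NormedSpace ℝ E] [NormedAddCommGroup F]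
  [NormedSpace ℝ F]

theorem hasDerivAt_comp_add_smul {f : E → F} {x v : E} {t : ℝ}
    (hf : DifferentiableAt ℝ f (x + t • v)) :
    HasDerivAt (fun s : ℝ ↦ f (x + s • v)) (fderiv ℝ f (x + t • v) v) t := by
  have hline : HasDerivAt (fun s : ℝ ↦ x + s • v) v t := by
    simpa using ((hasDerivAt_id t).smul_const v).const_add x
  exact hf.hasFDerivAt.comp_hasDerivAt t hline

theorem hasDerivAt_fderiv_comp_add_smul {f : E → F} (hf : ContDiff ℝ 2 f) (x v : E) :
    HasDerivAt (fun s : ℝ ↦ fderiv ℝ f (x + s • v) v) (fderiv ℝ (fderiv ℝ f) x v v) 0 := by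
  have hdiff : DifferentiableAt ℝ (fderiv ℝ f) (x + (0 : ℝ) • v) :=
    (hf.fderiv_right (m := 1) (by norm_num)).differentiable one_ne_zero _
  simpa using (hasDerivAt_comp_add_smul hdiff).clm_apply (hasDerivAt_const (0 : ℝ) v)

theorem fderiv_fderiv_apply_self_nonpos_of_isLocalMax {f : E → ℝ} (hf : ContDiff ℝ 2 f) {x : E}
    (hmax : IsLocalMax f x) (v : E) : fderiv ℝ (fderiv ℝ f) x v v ≤ 0 := by
  have hline : Tendsto (fun s : ℝ ↦ x + s • v) (𝓝 0) (𝓝 x) := by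
    have : Continuous fun s : ℝ ↦ x + s • v := by fun_prop
    simpa using this.tendsto 0
  refine secondDeriv_nonpos_of_isLocalMax (g := fun s : ℝ ↦ f (x + s • v)) ?_
    (.of_forall fun t ↦ hasDerivAt_comp_add_smul (hf.differentiable two_ne_zero _))
    (hasDerivAt_fderiv_comp_add_smul hf x v)
  simpa [IsLocalMax, IsMaxFilter] using hline.eventually hmax

end LineDerivatives

section Laplacian

variable {E : Type*} [NormedAddCommGroup E] [InnerProductSpace ℝ E] [FiniteDimensional ℝ E]

theorem laplacian_apply_eq_sum_fderiv {ι : Type*} [Fintype ι] (b : OrthonormalBasis ι ℝ E)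
    (f : E → ℝ) (x : E) : Δ f x = ∑ i, fderiv ℝ (fderiv ℝ f) x (b i) (b i) := by
  simp [laplacian_eq_iteratedFDeriv_orthonormalBasis f b, iteratedFDeriv_two_apply]

theorem laplacian_nonpos_of_isLocalMax {f : E → ℝ} (hf : ContDiff ℝ 2 f) {x : E}
    (hmax : IsLocalMax f x) : Δ f x ≤ 0 := by
  rw [laplacian_apply_eq_sum_fderiv (stdOrthonormalBasis ℝ E)]
  exact Finset.sum_nonpos fun i _ ↦ fderiv_fderiv_apply_self_nonpos_of_isLocalMax hf hmax _

theorem lap_eq_laplacian {N : ℕ} {f : EuclideanSpace ℝ (Fin N) → ℝ} (hf : ContDiff ℝ 2 f) :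
    lap f = Δ f := by
  ext x
  have hdiff : DifferentiableAt ℝ (fderiv ℝ f) x :=
    (hf.fderiv_right (m := 1) (by norm_num)).differentiable one_ne_zero x
  rw [laplacian_apply_eq_sum_fderiv (EuclideanSpace.basisFun (Fin N) ℝ)]
  simp only [lap, EuclideanSpace.basisFun_apply]
  refine Finset.sum_congr rfl fun i _ ↦ ?_
  rw [fderiv_clm_apply hdiff (differentiableAt_const _)]
  simp

/-- The Ornstein–Uhlenbeck operator `Δf - (y/2)·∇f`, the linear part of the profile equation. -/
def ou (f : E → ℝ) (y : E) : ℝ := Δ f y - fderiv ℝ f y y / 2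

end Laplacian

section ReflectionCoupling

variable {E : Type*} [NormedAddCommGroup E] [InnerProductSpace ℝ E]

/-- The penalised difference of `f` at two points, maximised in the doubling of variables. The
concave modulus `r - r² / 2` produces a term of definite sign at a maximum point, and `ε` forces
the maximum to be attained. -/
def doubledDifference (f : E → ℝ) (L ε : ℝ) (z : E × E) : ℝ :=
  f z.1 - f z.2 - L * (‖z.1 - z.2‖ - ‖z.1 - z.2‖ ^ 2 / 2) - ε * (‖z.1‖ ^ 2 + ‖z.2‖ ^ 2)

variable {f : E → ℝ} {L ε : ℝ} {z : E × E}

theorem hasDerivAt_norm_sq_add_smul (x v : E) (t : ℝ) :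
    HasDerivAt (fun s : ℝ ↦ ‖x + s • v‖ ^ 2) (2 * ⟪x, v⟫ + 2 * t * ‖v‖ ^ 2) t := by
  have hline : HasDerivAt (fun s : ℝ ↦ x + s • v) v t := by
    simpa using ((hasDerivAt_id t).smul_const v).const_add x
  refine hline.norm_sq.congr_deriv ?_
  rw [inner_add_left, real_inner_smul_left, real_inner_self_eq_norm_sq]
  ring

theorem doubledDifference_add_smul {e v w : E} {c s t : ℝ} (he : ‖e‖ = 1)
    (hz : z.1 - z.2 = s • e) (hvw : v - w = c • e) (ht : 0 ≤ s + t * c) :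
    doubledDifference f L ε (z.1 + t • v, z.2 + t • w) =
      f (z.1 + t • v) - f (z.2 + t • w) - L * ((s + t * c) - (s + t * c) ^ 2 / 2)
        - ε * (‖z.1 + t • v‖ ^ 2 + ‖z.2 + t • w‖ ^ 2) := by
  have hdiff : z.1 + t • v - (z.2 + t • w) = (s + t * c) • e := by
    rw [add_sub_add_comm, ← smul_sub, hz, hvw, smul_smul, ← add_smul]
  simp only [doubledDifference, hdiff, norm_smul, he, Real.norm_of_nonneg ht, mul_one]

theorem fderiv_sub_fderiv_of_isLocalMax_doubledDifference {e v w : E} {c s : ℝ}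
    (hf : ContDiff ℝ 2 f) (hmax : IsLocalMax (doubledDifference f L ε) z) (he : ‖e‖ = 1)
    (hs : 0 < s) (hz : z.1 - z.2 = s • e) (hvw : v - w = c • e) :
    fderiv ℝ f z.1 v - fderiv ℝ f z.2 w
        = L * c * (1 - s) + 2 * ε * (⟪z.1, v⟫ + ⟪z.2, w⟫) ∧
      fderiv ℝ (fderiv ℝ f) z.1 v v - fderiv ℝ (fderiv ℝ f) z.2 w w + L * c ^ 2
        ≤ 2 * ε * (‖v‖ ^ 2 + ‖w‖ ^ 2) := by
  let g : ℝ → ℝ := fun t ↦ f (z.1 + t • v) - f (z.2 + t • w)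
    - L * ((s + t * c) - (s + t * c) ^ 2 / 2) - ε * (‖z.1 + t • v‖ ^ 2 + ‖z.2 + t • w‖ ^ 2)
  let g' : ℝ → ℝ := fun t ↦ fderiv ℝ f (z.1 + t • v) v - fderiv ℝ f (z.2 + t • w) w
    - L * (c - (s + t * c) * c)
    - ε * ((2 * ⟪z.1, v⟫ + 2 * t * ‖v‖ ^ 2) + (2 * ⟪z.2, w⟫ + 2 * t * ‖w‖ ^ 2))
  have hg_eq : ∀ᶠ t in 𝓝 (0 : ℝ), doubledDifference f L ε (z.1 + t • v, z.2 + t • w) = g t := by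
    have hcont : Continuous fun t : ℝ ↦ s + t * c := by fun_prop
    filter_upwards [hcont.continuousAt.eventually (lt_mem_nhds (by simpa using hs))] with t ht
    exact doubledDifference_add_smul he hz hvw ht.le
  have hgmax : IsLocalMax g 0 := by
    let γ : ℝ → E × E := fun t ↦ (z.1 + t • v, z.2 + t • w)
    have hγ : Continuous γ := by fun_prop
    have hz₀ : IsLocalMax (doubledDifference f L ε) (γ 0) := by
      simpa [γ] using hmax
    exact (hz₀.comp_continuous hγ.continuousAt).congr hg_eq
  have hlin (t : ℝ) : HasDerivAt (fun t ↦ s + t * c) c t := by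
    simpa using ((hasDerivAt_id t).mul_const c).const_add s
  have hg (t : ℝ) : HasDerivAt g (g' t) t := by
    have hd := hf.differentiable two_ne_zero
    refine ((((hasDerivAt_comp_add_smul (hd _)).sub (hasDerivAt_comp_add_smul (hd _))).sub
      (((hlin t).sub (((hlin t).pow 2).div_const 2)).const_mul L)).sub
      (((hasDerivAt_norm_sq_add_smul z.1 v t).add
        (hasDerivAt_norm_sq_add_smul z.2 w t)).const_mul ε)).congr_deriv ?_
    simp only [g']
    ring
  have hg' : HasDerivAt g' (fderiv ℝ (fderiv ℝ f) z.1 v v - fderiv ℝ (fderiv ℝ f) z.2 w w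
      + L * c ^ 2 - 2 * ε * (‖v‖ ^ 2 + ‖w‖ ^ 2)) 0 := by
    have hquad (a b : ℝ) : HasDerivAt (fun t : ℝ ↦ 2 * a + 2 * t * b) (2 * b) 0 := by
      simpa using (((hasDerivAt_id (0 : ℝ)).const_mul 2).mul_const b).const_add (2 * a)
    refine ((((hasDerivAt_fderiv_comp_add_smul hf z.1 v).sub
      (hasDerivAt_fderiv_comp_add_smul hf z.2 w)).sub
      ((((hlin 0).mul_const c).const_sub c).const_mul L)).sub
      (((hquad ⟪z.1, v⟫ (‖v‖ ^ 2)).add (hquad ⟪z.2, w⟫ (‖w‖ ^ 2))).const_mul ε)).congr_deriv ?_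
    ring
  have hfirst : g' 0 = 0 := (hg 0).deriv ▸ hgmax.deriv_eq_zero
  have hsecond := secondDeriv_nonpos_of_isLocalMax hgmax (.of_forall hg) hg'
  simp only [g', zero_smul, add_zero, zero_mul, mul_zero] at hfirst
  constructor <;> linarith

theorem fderiv_self_sub_fderiv_self_nonneg_of_isLocalMax_doubledDifference
    (hf : ContDiff ℝ 2 f) (hL : 0 ≤ L) (hε : 0 ≤ ε)
    (hmax : IsLocalMax (doubledDifference f L ε) z) (hpos : z.1 ≠ z.2) (hle : ‖z.1 - z.2‖ ≤ 1) :
    0 ≤ fderiv ℝ f z.1 z.1 - fderiv ℝ f z.2 z.2 := by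
  have hs : 0 < ‖z.1 - z.2‖ := norm_pos_iff.2 (sub_ne_zero.2 hpos)
  have he : ‖‖z.1 - z.2‖⁻¹ • (z.1 - z.2)‖ = 1 := norm_smul_inv_norm (𝕜 := ℝ) (sub_ne_zero.2 hpos)
  have hz : z.1 - z.2 = ‖z.1 - z.2‖ • ‖z.1 - z.2‖⁻¹ • (z.1 - z.2) := by
    rw [smul_inv_smul₀ hs.ne']
  rw [(fderiv_sub_fderiv_of_isLocalMax_doubledDifference hf hmax he hs hz hz).1,
    real_inner_self_eq_norm_sq, real_inner_self_eq_norm_sq]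
  have := sub_nonneg.2 hle
  positivity

theorem laplacian_sub_laplacian_le_of_isLocalMax_doubledDifference [FiniteDimensional ℝ E]
    (hf : ContDiff ℝ 2 f) (hmax : IsLocalMax (doubledDifference f L ε) z) (hpos : z.1 ≠ z.2) :
    Δ f z.1 - Δ f z.2 + 4 * L ≤ 4 * ε * finrank ℝ E := by
  have hs : 0 < ‖z.1 - z.2‖ := norm_pos_iff.2 (sub_ne_zero.2 hpos)
  set e : E := ‖z.1 - z.2‖⁻¹ • (z.1 - z.2) with he_def
  have he : ‖e‖ = 1 := norm_smul_inv_norm (𝕜 := ℝ) (sub_ne_zero.2 hpos)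
  have hz : z.1 - z.2 = ‖z.1 - z.2‖ • e := by rw [he_def, smul_inv_smul₀ hs.ne']
  let b := stdOrthonormalBasis ℝ E
  let R : E ≃ₗᵢ[ℝ] E := (ℝ ∙ e)ᗮ.reflection
  have hR (v : E) : v - R v = (2 * ⟪e, v⟫) • e := by
    simp only [R, Submodule.reflection_orthogonal_apply, Submodule.reflection_singleton_apply, he]
    simp [two_smul, two_mul, add_smul]
  have hsum : ∑ i, ⟪e, b i⟫ ^ 2 = 1 := by
    simpa [he] using b.sum_sq_inner_left e
  have hterm (i) := (fderiv_sub_fderiv_of_isLocalMax_doubledDifference hf hmax he hs hz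
    (hR (b i))).2
  have htotal := Finset.sum_le_sum fun i (_ : i ∈ Finset.univ) ↦ hterm i
  simp only [mul_pow, Finset.sum_add_distrib, Finset.sum_sub_distrib, ← Finset.mul_sum, hsum,
    LinearIsometryEquiv.norm_map, b.norm_eq_one, one_pow, mul_one, Finset.sum_const,
    Finset.card_univ, Fintype.card_fin, nsmul_eq_mul] at htotal
  rw [laplacian_apply_eq_sum_fderiv b, laplacian_apply_eq_sum_fderiv (b.map R)]
  simp only [OrthonormalBasis.map_apply]
  linarith

theorem sub_le_two_mul_of_abs_le {α : Type*} {u : α → ℝ} {M : ℝ} (hM : ∀ x, |u x| ≤ M) (x y : α) :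
    u x - u y ≤ 2 * M := by
  linarith [(abs_le.1 (hM x)).2, (abs_le.1 (hM y)).1]

theorem exists_isMaxOn_doubledDifference [FiniteDimensional ℝ E] {M : ℝ} (hf : Continuous f)
    (hM : ∀ x, |f x| ≤ M) (hL : 0 ≤ L) (hε : 0 < ε) (hz : ‖z.1 - z.2‖ ≤ 1)
    (hpos : 0 < doubledDifference f L ε z) :
    ∃ w ∈ {w : E × E | ‖w.1 - w.2‖ ≤ 1},
      IsMaxOn (doubledDifference f L ε) {w | ‖w.1 - w.2‖ ≤ 1} w := by
  have hcont : Continuous (doubledDifference f L ε) := by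
    unfold doubledDifference
    fun_prop
  refine hcont.continuousOn.exists_isMaxOn' (isClosed_le (by fun_prop) (by fun_prop)) hz ?_
  rw [eventually_inf_principal]
  have hfar : ∀ᶠ w : E × E in cocompact (E × E), 2 * M / ε < ‖w‖ ^ 2 :=
    ((tendsto_pow_atTop two_ne_zero).comp (tendsto_norm_cocompact_atTop (E := E × E))).eventually
      (eventually_gt_atTop _)
  filter_upwards [hfar] with w hw (hwle : ‖w.1 - w.2‖ ≤ 1)
  rw [div_lt_iff₀ hε] at hw
  have hmodulus : 0 ≤ L * (‖w.1 - w.2‖ - ‖w.1 - w.2‖ ^ 2 / 2) :=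
    mul_nonneg hL (by nlinarith [norm_nonneg (w.1 - w.2)])
  have hnorm : ‖w‖ ^ 2 ≤ ‖w.1‖ ^ 2 + ‖w.2‖ ^ 2 := by
    rcases max_choice ‖w.1‖ ‖w.2‖ with h | h <;> rw [Prod.norm_def, h] <;>
      linarith [sq_nonneg ‖w.1‖, sq_nonneg ‖w.2‖]
  have hpenalty : ‖w‖ ^ 2 * ε ≤ ε * (‖w.1‖ ^ 2 + ‖w.2‖ ^ 2) := by nlinarith
  refine le_trans ?_ hpos.le
  unfold doubledDifference
  linarith [sub_le_two_mul_of_abs_le hM w.1 w.2]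

theorem exists_isLocalMax_doubledDifference [FiniteDimensional ℝ E] {M : ℝ} (hf : Continuous f)
    (hM : ∀ x, |f x| ≤ M) (hL : 4 * M ≤ L) (hε : 0 < ε) (hz : ‖z.1 - z.2‖ ≤ 1)
    (hpos : 0 < doubledDifference f L ε z) :
    ∃ w, IsLocalMax (doubledDifference f L ε) w ∧ w.1 ≠ w.2 ∧ ‖w.1 - w.2‖ ≤ 1 := by
  have hM₀ : 0 ≤ M := (abs_nonneg _).trans (hM 0)
  obtain ⟨w, hw, hwmax⟩ := exists_isMaxOn_doubledDifference hf hM (by linarith) hε hz hpos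
  have hwpos : 0 < doubledDifference f L ε w := hpos.trans_le (hwmax hz)
  have hpenalty : 0 ≤ ε * (‖w.1‖ ^ 2 + ‖w.2‖ ^ 2) := by positivity
  have hlt : ‖w.1 - w.2‖ < 1 := by
    refine lt_of_le_of_ne hw fun h ↦ ?_
    rw [doubledDifference, h] at hwpos
    linarith [sub_le_two_mul_of_abs_le hM w.1 w.2]
  refine ⟨w, hwmax.isLocalMax ?_, fun h ↦ ?_, hw⟩
  · exact (by fun_prop : Continuous fun w : E × E ↦ ‖w.1 - w.2‖).continuousAt.eventually
      (ge_mem_nhds hlt)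
  · rw [doubledDifference, sub_eq_zero.2 h, norm_zero, h] at hwpos
    rw [h] at hpenalty
    linarith

theorem exists_lipschitzWith_of_abs_ou_le [FiniteDimensional ℝ E] {M K : ℝ} (hf : ContDiff ℝ 2 f)
    (hM : ∀ x, |f x| ≤ M) (hK : ∀ x, |ou f x| ≤ K) : ∃ L, LipschitzWith L f := by
  have hM₀ : 0 ≤ M := (abs_nonneg _).trans (hM 0)
  have hK₀ : 0 ≤ K := (abs_nonneg _).trans (hK 0)
  set L : ℝ := 4 * M + K + finrank ℝ E + 1
  have hML : 4 * M ≤ L := by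
    have : (0 : ℝ) ≤ finrank ℝ E := Nat.cast_nonneg _
    linarith
  have hL₀ : 0 < L := by positivity
  refine ⟨L.toNNReal, LipschitzWith.of_le_add_mul' L fun x y ↦ ?_⟩
  rw [dist_eq_norm]
  by_contra! hxy
  have hdiff := sub_le_two_mul_of_abs_le hM x y
  have hle : ‖x - y‖ ≤ 1 := by
    by_contra! h
    nlinarith
  have hgap : 0 < f x - f y - L * (‖x - y‖ - ‖x - y‖ ^ 2 / 2) := by
    nlinarith [sq_nonneg ‖x - y‖]
  obtain ⟨ε, hε, hε₁, hpos⟩ : ∃ ε, 0 < ε ∧ ε ≤ 1 ∧ 0 < doubledDifference f L ε (x, y) := by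
    have hcont : Continuous fun ε ↦ doubledDifference f L ε (x, y) := by
      unfold doubledDifference
      fun_prop
    have h₀ : 0 < doubledDifference f L 0 (x, y) := by simpa [doubledDifference] using hgap
    have hev := (hcont.tendsto 0).eventually (lt_mem_nhds h₀)
    obtain ⟨ε, h, hε⟩ := ((hev.filter_mono nhdsWithin_le_nhds).and
      (Ioc_mem_nhdsGT (zero_lt_one (α := ℝ)))).exists
    exact ⟨ε, hε.1, hε.2, h⟩
  obtain ⟨z, hmax, hne, hz⟩ := exists_isLocalMax_doubledDifference hf.continuous hM hML hε hle hpos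
  have hfirst := fderiv_self_sub_fderiv_self_nonneg_of_isLocalMax_doubledDifference hf hL₀.le
    hε.le hmax hne hz
  have hsecond := laplacian_sub_laplacian_le_of_isLocalMax_doubledDifference hf hmax hne
  have h₁ := (abs_le.1 (hK z.1)).1
  have h₂ := (abs_le.1 (hK z.2)).2
  have hdim : ε * finrank ℝ E ≤ finrank ℝ E := mul_le_of_le_one_left (Nat.cast_nonneg _) hε₁
  unfold ou at h₁ h₂
  nlinarith

end ReflectionCoupling

section Decay

variable {E : Type*} [NormedAddCommGroup E] [MeasurableSpace E] [BorelSpace E] {μ : Measure E}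

theorem tendsto_setIntegral_ball_cocompact [ProperSpace E] [μ.Regular] {F : E → ℝ}
    (hF : Integrable F μ) (hF₀ : 0 ≤ F) (r : ℝ) :
    Tendsto (fun x ↦ ∫ y in ball x r, F y ∂μ) (cocompact E) (𝓝 0) := by
  rw [Metric.tendsto_nhds]
  intro ε hε
  obtain ⟨g, hg_supp, hg_close, -, hg_int⟩ :=
    hF.exists_hasCompactSupport_integral_sub_le (half_pos hε)
  obtain ⟨R, hR⟩ := hg_supp.isBounded.subset_closedBall 0
  filter_upwards [(tendsto_norm_cocompact_atTop (E := E)).eventually (eventually_ge_atTop (R + r))]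
    with x hx
  have hg_zero : ∀ y ∈ ball x r, g y = 0 := fun y hy ↦ by
    by_contra hgy
    have hyR : ‖y‖ ≤ R := by simpa using hR (subset_tsupport g hgy)
    rw [mem_ball', dist_eq_norm] at hy
    linarith [norm_sub_norm_le x y]
  rw [dist_zero_right, Real.norm_of_nonneg (integral_nonneg hF₀)]
  calc ∫ y in ball x r, F y ∂μ
      ≤ ∫ y in ball x r, ‖F y - g y‖ ∂μ :=
        setIntegral_mono_on hF.integrableOn (hF.sub hg_int).norm.integrableOn
          measurableSet_ball fun y hy ↦ by simpa [hg_zero y hy] using le_abs_self _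
    _ ≤ ∫ y, ‖F y - g y‖ ∂μ :=
        setIntegral_le_integral (hF.sub hg_int).norm (.of_forall fun _ ↦ norm_nonneg _)
    _ ≤ ε / 2 := hg_close
    _ < ε := half_lt_self hε

theorem tendsto_zero_cocompact_of_integrable_rpow [NormedSpace ℝ E] [FiniteDimensional ℝ E]
    [μ.IsAddHaarMeasure] {f : E → ℝ} {q : ℝ} (hf : UniformContinuous f) (hq : 0 < q)
    (hint : Integrable (fun x ↦ |f x| ^ q) μ) : Tendsto f (cocompact E) (𝓝 0) := by
  rw [Metric.tendsto_nhds]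
  intro δ hδ
  obtain ⟨r, hr, hfr⟩ := Metric.uniformContinuous_iff.1 hf (δ / 2) (half_pos hδ)
  have hvol : 0 < μ.real (ball 0 r) :=
    ENNReal.toReal_pos (measure_ball_pos μ 0 hr).ne' measure_ball_lt_top.ne
  have htail := tendsto_setIntegral_ball_cocompact hint
    (fun x ↦ Real.rpow_nonneg (abs_nonneg (f x)) q) r
  have hmass : 0 < μ.real (ball 0 r) * (δ / 2) ^ q := by positivity
  filter_upwards [htail.eventually (gt_mem_nhds hmass)] with x hx
  rw [dist_zero_right, Real.norm_eq_abs]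
  contrapose! hx
  have hlower : ∀ y ∈ ball x r, (δ / 2) ^ q ≤ |f y| ^ q := fun y hy ↦ by
    have hxy := hfr hy
    rw [Real.dist_eq] at hxy
    refine Real.rpow_le_rpow (by positivity) ?_ hq.le
    linarith [abs_sub_abs_le_abs_sub (f x) (f y), abs_sub_comm (f x) (f y)]
  rw [← Measure.addHaar_real_ball_center μ x, ← smul_eq_mul, ← setIntegral_const]
  exact setIntegral_mono_on (integrableOn_const measure_ball_lt_top.ne) hint.integrableOn
    measurableSet_ball hlower

end Decay

section Profile

variable {E : Type*} [NormedAddCommGroup E] [InnerProductSpace ℝ E] [FiniteDimensional ℝ E]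

/-- Classical solutions of the profile equation `Δφ - (y/2)·∇φ + |φ|^(p-1) φ - φ/(p-1) = 0`. -/
structure IsProfile (p : ℝ) (φ : E → ℝ) : Prop where
  contDiff : ContDiff ℝ 2 φ
  equation : ∀ y, ou φ y + |φ y| ^ (p - 1) * φ y - (p - 1)⁻¹ * φ y = 0

theorem ou_sub {f g : E → ℝ} (hf : ContDiff ℝ 2 f) (hg : ContDiff ℝ 2 g) (y : E) :
    ou (f - g) y = ou f y - ou g y := by
  rw [ou, ou, ou, hf.contDiffAt.laplacian_sub hg.contDiffAt,
    fderiv_sub (hf.differentiable two_ne_zero y) (hg.differentiable two_ne_zero y)]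
  simp only [sub_apply]
  ring

theorem IsProfile.neg {p : ℝ} {φ : E → ℝ} (hφ : IsProfile p φ) : IsProfile p (-φ) where
  contDiff := hφ.contDiff.neg
  equation y := by
    have hou : ou (-φ) y = -ou φ y := by
      simp only [ou, laplacian_neg, fderiv_neg, neg_apply, Pi.neg_apply]
      ring
    rw [hou, Pi.neg_apply, abs_neg]
    linarith [hφ.equation y]

theorem rpow_sub_rpow_le_mul {p a b : ℝ} (hp : 1 ≤ p) (ha : 0 ≤ a) (hab : a < b) :
    b ^ p - a ^ p ≤ p * b ^ (p - 1) * (b - a) := by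
  have hb : 0 < b := ha.trans_lt hab
  have hbernoulli := one_add_mul_self_le_rpow_one_add (s := a / b - 1)
    (by linarith [div_nonneg ha hb.le]) hp
  rw [add_sub_cancel, Real.div_rpow ha hb.le, le_div_iff₀ (by positivity)] at hbernoulli
  rw [Real.rpow_sub_one hb.ne']
  have : p * (b ^ p / b) * (b - a) = b ^ p - (1 + p * (a / b - 1)) * b ^ p := by
    field_simp
    ring
  linarith

variable {p ε R : ℝ} {φ : E → ℝ}

theorem IsProfile.le_of_supersolution {w : E → ℝ} (hp : 1 < p) (hφ : IsProfile p φ)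
    (hφ_decay : Tendsto φ (cocompact E) (𝓝 0)) (hε : p * ε ^ (p - 1) < (p - 1)⁻¹)
    (hφε : ∀ y, R ≤ ‖y‖ → φ y ≤ ε) (hw : ContDiff ℝ 2 w) (hw₀ : ∀ y, R ≤ ‖y‖ → 0 ≤ w y)
    (hw_super : ∀ y, R < ‖y‖ → ou w y + w y ^ p - (p - 1)⁻¹ * w y ≤ 0)
    (hboundary : ∀ y, ‖y‖ = R → φ y ≤ w y) (y : E) (hy : R ≤ ‖y‖) : φ y ≤ w y := by
  by_contra! hlt
  have hu : ContDiff ℝ 2 (φ - w) := hφ.contDiff.sub hw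
  obtain ⟨z, hz, hmax⟩ : ∃ z ∈ {z | R ≤ ‖z‖}, IsMaxOn (φ - w) {z | R ≤ ‖z‖} z := by
    refine hu.continuous.continuousOn.exists_isMaxOn'
      (isClosed_le continuous_const continuous_norm) hy ?_
    rw [eventually_inf_principal]
    filter_upwards [hφ_decay.eventually (gt_mem_nhds (sub_pos.2 hlt))] with z hz hzR
    simp only [Pi.sub_apply]
    linarith [hw₀ z hzR]
  have hpos : 0 < φ z - w z := (sub_pos.2 hlt).trans_le (hmax hy)
  have hzR : R < ‖z‖ := hz.lt_of_ne fun h ↦ by linarith [hboundary z h.symm]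
  have hlocal : IsLocalMax (φ - w) z := hmax.isLocalMax
    (continuous_norm.continuousAt.eventually (le_mem_nhds hzR))
  have hou : ou φ z - ou w z ≤ 0 := by
    rw [← ou_sub hφ.contDiff hw, ou, hlocal.fderiv_eq_zero]
    simpa using laplacian_nonpos_of_isLocalMax hu hlocal
  have hwz := hw₀ z hz
  have hφz : 0 < φ z := by linarith
  have hpower : |φ z| ^ (p - 1) * φ z = φ z ^ p := by
    rw [abs_of_pos hφz, ← Real.rpow_add_one hφz.ne', sub_add_cancel]
  have hconvex := rpow_sub_rpow_le_mul hp.le hwz (sub_pos.1 hpos)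
  have hslope : p * φ z ^ (p - 1) < (p - 1)⁻¹ := lt_of_le_of_lt
    (by gcongr; exact hφε z hz) hε
  have hequation := hφ.equation z
  rw [hpower] at hequation
  nlinarith [hw_super z hzR, mul_lt_mul_of_pos_right hslope hpos]

theorem ou_zero (y : E) : ou (0 : E → ℝ) y = 0 := by
  simpa using ou_sub (contDiff_const (c := (0 : ℝ))) (contDiff_const (c := (0 : ℝ))) y

theorem IsProfile.eq_zero_of_eq_zero_on_sphere (hp : 1 < p) (hφ : IsProfile p φ)
    (hφ_decay : Tendsto φ (cocompact E) (𝓝 0)) (hε : p * ε ^ (p - 1) < (p - 1)⁻¹)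
    (hφε : ∀ y, R ≤ ‖y‖ → |φ y| ≤ ε) (hsphere : ∀ y, ‖y‖ = R → φ y = 0) (y : E)
    (hy : R ≤ ‖y‖) : φ y = 0 := by
  have hzero : ∀ z : E, ou (0 : E → ℝ) z + (0 : E → ℝ) z ^ p - (p - 1)⁻¹ * (0 : E → ℝ) z ≤ 0 :=
    fun z ↦ by simp [ou_zero, Real.zero_rpow (by linarith : p ≠ 0)]
  have hupper := hφ.le_of_supersolution hp hφ_decay hε
    (fun z hz ↦ (le_abs_self _).trans (hφε z hz)) contDiff_const (w := 0) (fun _ _ ↦ le_rfl)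
    (fun z _ ↦ hzero z) (fun z hz ↦ (hsphere z hz).le) y hy
  have hlower := hφ.neg.le_of_supersolution hp (by rw [← neg_zero]; exact hφ_decay.neg) hε
    (fun z hz ↦ (neg_le_abs _).trans (hφε z hz)) contDiff_const (w := 0) (fun _ _ ↦ le_rfl)
    (fun z _ ↦ hzero z) (fun z hz ↦ by simp [hsphere z hz]) y hy
  simp only [Pi.neg_apply, Pi.zero_apply] at hupper hlower
  linarith

end Profile

section Barrier

variable {E : Type*} [NormedAddCommGroup E] [InnerProductSpace ℝ E]

theorem fderiv_fderiv_apply_self_eq_of_hasDerivAt {f : E → ℝ} (hf : ContDiff ℝ 2 f) {x v : E}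
    {g : ℝ → ℝ} {c : ℝ} (hg : ∀ t, HasDerivAt (fun s : ℝ ↦ f (x + s • v)) (g t) t)
    (hg' : HasDerivAt g c 0) : fderiv ℝ (fderiv ℝ f) x v v = c := by
  have hline : (fun s : ℝ ↦ fderiv ℝ f (x + s • v) v) = g := funext fun s ↦
    (hasDerivAt_comp_add_smul (hf.differentiable two_ne_zero _)).unique (hg s)
  exact (hline ▸ hasDerivAt_fderiv_comp_add_smul hf x v).unique hg'

theorem ou_comp_norm_sq [FiniteDimensional ℝ E] {h h' h'' : ℝ → ℝ}
    (hh : ∀ τ, 0 ≤ τ → HasDerivAt h (h' τ) τ) (hh' : ∀ τ, 0 ≤ τ → HasDerivAt h' (h'' τ) τ)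
    (hf : ContDiff ℝ 2 fun y : E ↦ h (‖y‖ ^ 2)) (x : E) :
    ou (fun y : E ↦ h (‖y‖ ^ 2)) x =
      4 * ‖x‖ ^ 2 * h'' (‖x‖ ^ 2) + (2 * finrank ℝ E - ‖x‖ ^ 2) * h' (‖x‖ ^ 2) := by
  have hfirst (v : E) (t : ℝ) : HasDerivAt (fun s : ℝ ↦ h (‖x + s • v‖ ^ 2))
      (h' (‖x + t • v‖ ^ 2) * (2 * ⟪x, v⟫ + 2 * t * ‖v‖ ^ 2)) t :=
    (hh _ (sq_nonneg ‖x + t • v‖)).comp t (hasDerivAt_norm_sq_add_smul x v t)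
  have hsecond (v : E) : fderiv ℝ (fderiv ℝ fun y : E ↦ h (‖y‖ ^ 2)) x v v =
      4 * h'' (‖x‖ ^ 2) * ⟪x, v⟫ ^ 2 + 2 * h' (‖x‖ ^ 2) * ‖v‖ ^ 2 := by
    refine fderiv_fderiv_apply_self_eq_of_hasDerivAt hf (hfirst v) ?_
    have hlin : HasDerivAt (fun t : ℝ ↦ 2 * ⟪x, v⟫ + 2 * t * ‖v‖ ^ 2) (2 * ‖v‖ ^ 2) 0 := by
      simpa using (((hasDerivAt_id (0 : ℝ)).const_mul 2).mul_const (‖v‖ ^ 2)).const_add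
        (2 * ⟪x, v⟫)
    refine (((hh' _ (sq_nonneg ‖x + (0 : ℝ) • v‖)).comp 0 (hasDerivAt_norm_sq_add_smul x v 0)).mul
      hlin).congr_deriv ?_
    simp only [Function.comp_apply, zero_smul, add_zero, mul_zero, zero_mul]
    ring
  have hradial : fderiv ℝ (fun y : E ↦ h (‖y‖ ^ 2)) x x = 2 * ‖x‖ ^ 2 * h' (‖x‖ ^ 2) := by
    have hline : HasDerivAt (fun s : ℝ ↦ h (‖x + s • x‖ ^ 2)) _ 0 :=
      hasDerivAt_comp_add_smul (f := fun y : E ↦ h (‖y‖ ^ 2)) (hf.differentiable two_ne_zero _)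
    simpa [real_inner_self_eq_norm_sq, mul_comm, mul_assoc] using hline.unique (hfirst x 0)
  have hparseval : ∑ i, ⟪x, stdOrthonormalBasis ℝ E i⟫ ^ 2 = ‖x‖ ^ 2 :=
    (stdOrthonormalBasis ℝ E).sum_sq_inner_left x
  rw [ou, laplacian_apply_eq_sum_fderiv (stdOrthonormalBasis ℝ E), hradial]
  simp only [hsecond, Finset.sum_add_distrib, ← Finset.mul_sum, hparseval,
    OrthonormalBasis.norm_eq_one, one_pow, mul_one, Finset.sum_const, Finset.card_univ,
    Fintype.card_fin, nsmul_eq_mul]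
  ring

/-- The radial barrier `A ((1+τ)^(-b) - (S/2) (1+τ)^(-b-1))` in the variable `τ = ‖y‖²`. The first
power is the exact decay of solutions; the correction makes it a supersolution where `S ≤ 1+τ`. -/
def barrier (A S b τ : ℝ) : ℝ := A * ((1 + τ) ^ (-b) - S / 2 * (1 + τ) ^ (-b - 1))

variable {A S b τ : ℝ}

theorem hasDerivAt_one_add_rpow (hτ : 0 ≤ τ) (a : ℝ) :
    HasDerivAt (fun τ : ℝ ↦ (1 + τ) ^ a) (a * (1 + τ) ^ (a - 1)) τ := by
  simpa using ((hasDerivAt_id τ).const_add 1).rpow_const (p := a) (Or.inl (by simp; linarith))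

theorem contDiff_barrier (A S b : ℝ) : ContDiff ℝ 2 fun y : E ↦ barrier A S b (‖y‖ ^ 2) := by
  have hpow (a : ℝ) : ContDiff ℝ 2 fun y : E ↦ (1 + ‖y‖ ^ 2) ^ a :=
    (contDiff_const.add (contDiff_norm_sq ℝ)).rpow_const_of_ne fun y ↦ by positivity
  exact contDiff_const.mul ((hpow _).sub (contDiff_const.mul (hpow _)))

theorem ou_barrier [FiniteDimensional ℝ E] (A S b : ℝ) (x : E) :
    ou (fun y : E ↦ barrier A S b (‖y‖ ^ 2)) x = A * ((1 + ‖x‖ ^ 2) ^ (-b - 3) *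
      (4 * ‖x‖ ^ 2 * (b * (b + 1) * (1 + ‖x‖ ^ 2) - S / 2 * (b + 1) * (b + 2))
      + (2 * finrank ℝ E - ‖x‖ ^ 2) * (1 + ‖x‖ ^ 2) *
        (-b * (1 + ‖x‖ ^ 2) + S / 2 * (b + 1)))) := by
  let h' : ℝ → ℝ := fun τ ↦ A * (-b * (1 + τ) ^ (-b - 1)
    - S / 2 * ((-b - 1) * (1 + τ) ^ (-b - 1 - 1)))
  let h'' : ℝ → ℝ := fun τ ↦ A * (-b * ((-b - 1) * (1 + τ) ^ (-b - 1 - 1))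
    - S / 2 * ((-b - 1) * ((-b - 1 - 1) * (1 + τ) ^ (-b - 1 - 1 - 1))))
  have hh (τ : ℝ) (hτ : 0 ≤ τ) : HasDerivAt (barrier A S b) (h' τ) τ :=
    ((hasDerivAt_one_add_rpow hτ _).sub
      ((hasDerivAt_one_add_rpow hτ _).const_mul (S / 2))).const_mul A
  have hh' (τ : ℝ) (hτ : 0 ≤ τ) : HasDerivAt h' (h'' τ) τ :=
    (((hasDerivAt_one_add_rpow hτ _).const_mul (-b)).sub
      (((hasDerivAt_one_add_rpow hτ _).const_mul _).const_mul (S / 2))).const_mul A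
  have hQ : (1 + ‖x‖ ^ 2) ≠ 0 := by positivity
  have hpow₂ : (1 + ‖x‖ ^ 2) ^ (-b - 1 - 1) = (1 + ‖x‖ ^ 2) ^ (-b - 3) * (1 + ‖x‖ ^ 2) := by
    rw [← Real.rpow_add_one hQ]
    ring_nf
  have hpow₁ : (1 + ‖x‖ ^ 2) ^ (-b - 1) = (1 + ‖x‖ ^ 2) ^ (-b - 3) * (1 + ‖x‖ ^ 2) ^ 2 := by
    rw [sq (1 + ‖x‖ ^ 2), ← mul_assoc, ← hpow₂, ← Real.rpow_add_one hQ]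
    ring_nf
  rw [ou_comp_norm_sq hh hh' (contDiff_barrier A S b)]
  simp only [h', h'', hpow₁, hpow₂, show -b - 1 - 1 - 1 = -b - 3 by ring]
  ring


theorem barrier_eq (hτ : 0 ≤ τ) :
    barrier A S b τ = A * ((1 + τ) ^ (-b) * (1 - S / (2 * (1 + τ)))) := by
  have hQ : 0 < 1 + τ := by linarith
  rw [barrier, Real.rpow_sub_one hQ.ne']
  field_simp

theorem barrier_le (hA : 0 ≤ A) (hS : 0 ≤ S) (hτ : 0 ≤ τ) :
    barrier A S b τ ≤ A * (1 + τ) ^ (-b) := by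
  rw [barrier_eq hτ]
  gcongr
  have : 0 ≤ S / (2 * (1 + τ)) := by positivity
  exact mul_le_of_le_one_right (by positivity) (by linarith)

theorem barrier_nonneg (hA : 0 ≤ A) (hτ : 0 ≤ τ) (hSτ : S ≤ 1 + τ) : 0 ≤ barrier A S b τ := by
  have hratio : S / (2 * (1 + τ)) ≤ 1 := by
    rw [div_le_one (by positivity)]
    linarith
  rw [barrier_eq hτ]
  exact mul_nonneg hA (mul_nonneg (by positivity) (sub_nonneg.2 hratio))

theorem barrier_bracket_nonpos {b d S Q : ℝ} (hb : 0 ≤ b) (hd : 0 ≤ d)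
    (hS : 4 * (b + 1) * (4 * b + d + 1) ≤ S) (hQ : 1 ≤ Q) (hSQ : S ≤ Q) :
    4 * (Q - 1) * (b * (b + 1) * Q - S / 2 * (b + 1) * (b + 2))
      + (2 * d - (Q - 1)) * Q * (-b * Q + S / 2 * (b + 1)) + S / 4 * Q ^ 2
      - b * (Q ^ 3 - S / 2 * Q ^ 2) ≤ 0 := by
  have hS₀ : 0 ≤ S := le_trans (by positivity) hS
  have hlead : (4 * (b + 1) * (4 * b + d + 1)) * Q ^ 2 ≤ S * Q ^ 2 := by gcongr
  have hcross : (2 * d + 1) * (b + 1) / 2 * Q * S ≤ (2 * d + 1) * (b + 1) / 2 * Q * Q := by gcongr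
  have hdrop₁ : 0 ≤ (Q - 1) * (S * (b + 1) * (b + 2)) :=
    mul_nonneg (by linarith) (by positivity)
  have hdrop₂ : 0 ≤ (2 * d + 1) * b * Q ^ 2 := by positivity
  have hdrop₃ : 0 ≤ b * (b + 1) * Q := by positivity
  have hdrop₄ : 0 ≤ (b + 1) * Q ^ 2 := by positivity
  linarith

theorem barrier_rpow_le {p ε : ℝ} (hp : 1 < p) (hε : 0 ≤ ε)
    (hε_small : (2 * ε) ^ (p - 1) ≤ 1 / 4) (hS : 0 ≤ S) (hτ : 0 ≤ τ) (hQ : S ≤ 1 + τ) :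
    barrier (2 * ε * S ^ (p - 1)⁻¹) S (p - 1)⁻¹ τ ^ p ≤
      S / 4 * (2 * ε * S ^ (p - 1)⁻¹ * ((1 + τ) ^ (-(p - 1)⁻¹) / (1 + τ))) := by
  have hp₁ : 0 < p - 1 := sub_pos.2 hp
  set A := 2 * ε * S ^ (p - 1)⁻¹ with hA
  have hA₀ : 0 ≤ A := by positivity
  have hAp : A ^ (p - 1) ≤ S / 4 := by
    rw [hA, Real.mul_rpow (by positivity) (by positivity), ← Real.rpow_mul hS,
      inv_mul_cancel₀ hp₁.ne', Real.rpow_one]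
    nlinarith
  have hQp : ((1 + τ) ^ (-(p - 1)⁻¹)) ^ (p - 1) = (1 + τ)⁻¹ := by
    rw [← Real.rpow_mul (by positivity), neg_mul, inv_mul_cancel₀ hp₁.ne', Real.rpow_neg_one]
  calc barrier A S (p - 1)⁻¹ τ ^ p ≤ (A * (1 + τ) ^ (-(p - 1)⁻¹)) ^ p :=
        Real.rpow_le_rpow (barrier_nonneg hA₀ hτ hQ) (barrier_le hA₀ hS hτ) (by linarith)
    _ = (A * (1 + τ) ^ (-(p - 1)⁻¹)) ^ (p - 1) * (A * (1 + τ) ^ (-(p - 1)⁻¹)) := by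
        rw [← Real.rpow_add_one' (by positivity) (by linarith), sub_add_cancel]
    _ = A ^ (p - 1) * (A * ((1 + τ) ^ (-(p - 1)⁻¹) / (1 + τ))) := by
        rw [Real.mul_rpow hA₀ (by positivity), hQp]
        ring
    _ ≤ S / 4 * (A * ((1 + τ) ^ (-(p - 1)⁻¹) / (1 + τ))) := by gcongr

theorem ou_barrier_add_rpow_sub_nonpos [FiniteDimensional ℝ E] {p ε : ℝ} (hp : 1 < p)
    (hε : 0 ≤ ε) (hε_small : (2 * ε) ^ (p - 1) ≤ 1 / 4)
    (hS : 4 * ((p - 1)⁻¹ + 1) * (4 * (p - 1)⁻¹ + finrank ℝ E + 1) ≤ S) {x : E}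
    (hx : S ≤ 1 + ‖x‖ ^ 2) :
    ou (fun y : E ↦ barrier (2 * ε * S ^ (p - 1)⁻¹) S (p - 1)⁻¹ (‖y‖ ^ 2)) x
      + barrier (2 * ε * S ^ (p - 1)⁻¹) S (p - 1)⁻¹ (‖x‖ ^ 2) ^ p
      - (p - 1)⁻¹ * barrier (2 * ε * S ^ (p - 1)⁻¹) S (p - 1)⁻¹ (‖x‖ ^ 2) ≤ 0 := by
  have hb : 0 < (p - 1)⁻¹ := inv_pos.2 (sub_pos.2 hp)
  have hS₀ : 0 ≤ S := le_trans (by positivity) hS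
  have hpower := barrier_rpow_le hp hε hε_small hS₀ (sq_nonneg ‖x‖) hx
  set b := (p - 1)⁻¹
  set A := 2 * ε * S ^ b
  have hA₀ : 0 ≤ A := by positivity
  rw [ou_barrier, barrier_eq (sq_nonneg ‖x‖)]
  rw [barrier_eq (sq_nonneg ‖x‖)] at hpower
  set Q := 1 + ‖x‖ ^ 2 with hQ_def
  have hQ : 0 < Q := by positivity
  have hτ : ‖x‖ ^ 2 = Q - 1 := by rw [hQ_def]; ring
  have hQb : Q ^ (-b) = Q ^ (-b - 3) * Q ^ 3 := by
    rw [← Real.rpow_add_natCast hQ.ne']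
    norm_num
  have hbracket := mul_nonpos_of_nonneg_of_nonpos
    (show 0 ≤ A * Q ^ (-b - 3) by positivity)
    (barrier_bracket_nonpos hb.le (Nat.cast_nonneg (finrank ℝ E)) hS
      (by linarith [sq_nonneg ‖x‖] : 1 ≤ Q) hx)
  have hratio : Q ^ 3 / Q = Q ^ 2 := by field_simp
  have hhalf : Q ^ 3 * (1 - S / (2 * Q)) = Q ^ 3 - S / 2 * Q ^ 2 := by field_simp
  rw [hQb, mul_div_assoc, hratio, mul_assoc (Q ^ (-b - 3)), hhalf] at hpower
  rw [hτ, hQb, mul_assoc (Q ^ (-b - 3)) (Q ^ 3), hhalf]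
  linarith

end Barrier

section ProfileDecay

variable {E : Type*} [NormedAddCommGroup E] [InnerProductSpace ℝ E] [FiniteDimensional ℝ E]
  {p : ℝ} {φ : E → ℝ}

theorem exists_pos_mul_rpow_le {p δ : ℝ} (hp : 1 < p) (hδ : 0 < δ) (c : ℝ) :
    ∃ ε > 0, c * ε ^ (p - 1) < δ ∧ (2 * ε) ^ (p - 1) ≤ 1 / 4 := by
  have hp₁ : 0 < p - 1 := sub_pos.2 hp
  have hcont (a : ℝ) : Tendsto (fun ε : ℝ ↦ (a * ε) ^ (p - 1)) (𝓝 0) (𝓝 0) := by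
    have : Continuous fun ε : ℝ ↦ (a * ε) ^ (p - 1) :=
      (continuous_const.mul continuous_id).rpow_const fun _ ↦ Or.inr hp₁.le
    simpa [Real.zero_rpow hp₁.ne'] using this.tendsto 0
  have h₁ := ((hcont 1).const_mul c).eventually (gt_mem_nhds (by simpa using hδ))
  have h₂ := (hcont 2).eventually (ge_mem_nhds (by norm_num : (0 : ℝ) < 1 / 4))
  obtain ⟨ε, ⟨hε₁, hε₂⟩, hε⟩ := (((h₁.and h₂).filter_mono nhdsWithin_le_nhds).and
    (self_mem_nhdsWithin (s := Ioi (0 : ℝ)))).exists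
  exact ⟨ε, hε, by simpa using hε₁, hε₂⟩

theorem IsProfile.le_barrier {ε S R : ℝ} (hp : 1 < p) (hφ : IsProfile p φ)
    (hφ_decay : Tendsto φ (cocompact E) (𝓝 0)) (hε : 0 < ε)
    (hε_slope : p * ε ^ (p - 1) < (p - 1)⁻¹) (hε_small : (2 * ε) ^ (p - 1) ≤ 1 / 4)
    (hS : 4 * ((p - 1)⁻¹ + 1) * (4 * (p - 1)⁻¹ + finrank ℝ E + 1) ≤ S) (hR : 0 ≤ R)
    (hSR : S = 1 + R ^ 2) (hφε : ∀ y, R ≤ ‖y‖ → φ y ≤ ε) {y : E} (hy : R ≤ ‖y‖) :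
    φ y ≤ 2 * ε * S ^ (p - 1)⁻¹ * (1 + ‖y‖ ^ 2) ^ (-(p - 1)⁻¹) := by
  have hS₀ : 0 < S := by rw [hSR]; positivity
  have hA : 0 ≤ 2 * ε * S ^ (p - 1)⁻¹ := by positivity
  have hSy {z : E} (hz : R ≤ ‖z‖) : S ≤ 1 + ‖z‖ ^ 2 := by rw [hSR]; gcongr
  refine le_trans ?_ (barrier_le hA hS₀.le (sq_nonneg ‖y‖))
  refine hφ.le_of_supersolution hp hφ_decay hε_slope hφε (contDiff_barrier _ S _)
    (fun z hz ↦ barrier_nonneg hA (sq_nonneg _) (hSy hz))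
    (fun z hz ↦ ou_barrier_add_rpow_sub_nonpos hp hε.le hε_small hS (hSy hz.le))
    (fun z hz ↦ ?_) y hy
  have hvalue : barrier (2 * ε * S ^ (p - 1)⁻¹) S (p - 1)⁻¹ (‖z‖ ^ 2) = ε := by
    have hSb : S ^ (p - 1)⁻¹ * S ^ (-(p - 1)⁻¹) = 1 := by
      rw [← Real.rpow_add hS₀, add_neg_cancel, Real.rpow_zero]
    rw [barrier_eq (sq_nonneg _), hz, ← hSR]
    have hhalf : S / (2 * S) = 1 / 2 := by field_simp
    rw [hhalf]
    linear_combination ε * hSb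
  exact (hφε z hz.ge).trans hvalue.ge

theorem eventually_abs_le_of_tendsto_cocompact {f : E → ℝ} (hf : Tendsto f (cocompact E) (𝓝 0))
    {ε : ℝ} (hε : 0 < ε) : ∀ᶠ R in atTop, ∀ y, R ≤ ‖y‖ → |f y| ≤ ε := by
  have hsmall : ∀ᶠ y in cocompact E, |f y| ≤ ε :=
    hf.abs.eventually (ge_mem_nhds (by simpa using hε))
  rw [← cobounded_eq_cocompact, ← comap_norm_atTop, eventually_comap] at hsmall
  exact (eventually_forall_ge_atTop.2 hsmall).mono fun R hR y hy ↦ hR _ hy y rfl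

/-- Twice the scaling exponent `β = 1 / (p - 1)`: the power law `|y| ^ (-decayRate p)` is the one
invariant under the parabolic scaling of the equation. -/
def decayRate (p : ℝ) : ℝ := 2 * (p - 1)⁻¹

theorem IsProfile.exists_abs_le_norm_rpow (hp : 1 < p) (hφ : IsProfile p φ)
    (hφ_decay : Tendsto φ (cocompact E) (𝓝 0)) :
    ∃ C > 0, ∃ R, ∀ y, R ≤ ‖y‖ → |φ y| ≤ C * ‖y‖ ^ (-decayRate p) := by
  have hb : 0 < (p - 1)⁻¹ := inv_pos.2 (sub_pos.2 hp)
  obtain ⟨ε, hε, hε_slope, hε_small⟩ := exists_pos_mul_rpow_le hp hb p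
  obtain ⟨R, hφε, hR, hSR⟩ := ((eventually_abs_le_of_tendsto_cocompact hφ_decay hε).and
    ((eventually_ge_atTop (1 : ℝ)).and ((tendsto_pow_atTop two_ne_zero).eventually
      (eventually_ge_atTop
        (4 * ((p - 1)⁻¹ + 1) * (4 * (p - 1)⁻¹ + finrank ℝ E + 1)))))).exists
  have hS : 4 * ((p - 1)⁻¹ + 1) * (4 * (p - 1)⁻¹ + finrank ℝ E + 1) ≤ 1 + R ^ 2 := by linarith
  refine ⟨2 * ε * (1 + R ^ 2) ^ (p - 1)⁻¹, by positivity, R, fun y hy ↦ ?_⟩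
  have hy₀ : 0 < ‖y‖ := by linarith
  have hbracket : (1 + ‖y‖ ^ 2) ^ (-(p - 1)⁻¹) ≤ ‖y‖ ^ (-decayRate p) := calc
    (1 + ‖y‖ ^ 2) ^ (-(p - 1)⁻¹) ≤ (‖y‖ ^ 2) ^ (-(p - 1)⁻¹) :=
      Real.rpow_le_rpow_of_nonpos (by positivity) (by linarith) (by linarith)
    _ = ‖y‖ ^ (-decayRate p) := by
      rw [← Real.rpow_natCast, ← Real.rpow_mul hy₀.le, Nat.cast_two, decayRate, mul_neg]
  have hupper := hφ.le_barrier hp hφ_decay hε hε_slope hε_small hS (by linarith) rfl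
    (fun z hz ↦ (le_abs_self _).trans (hφε z hz)) hy
  have hlower := hφ.neg.le_barrier hp (by rw [← neg_zero]; exact hφ_decay.neg) hε hε_slope
    hε_small hS (by linarith) rfl (fun z hz ↦ (neg_le_abs _).trans (hφε z hz)) hy
  exact (abs_le'.2 ⟨hupper, hlower⟩).trans (by gcongr)

theorem IsProfile.eventually_eq_zero_of_eq_zero_on_sphere (hp : 1 < p) (hφ : IsProfile p φ)
    (hφ_decay : Tendsto φ (cocompact E) (𝓝 0)) :
    ∀ᶠ R in atTop, (∀ y, ‖y‖ = R → φ y = 0) → ∀ y, R ≤ ‖y‖ → φ y = 0 := by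
  obtain ⟨ε, hε, hε_slope, -⟩ := exists_pos_mul_rpow_le hp (inv_pos.2 (sub_pos.2 hp)) p
  filter_upwards [eventually_abs_le_of_tendsto_cocompact hφ_decay hε] with R hR hsphere y hy
  exact hφ.eq_zero_of_eq_zero_on_sphere hp hφ_decay hε_slope hR hsphere y hy

end ProfileDecay

section UniqueContinuation

variable {E : Type*} [NormedAddCommGroup E] [InnerProductSpace ℝ E]

theorem fderiv_fderiv_apply_const {f : E → ℝ} (hf : ContDiff ℝ 2 f) (v w x : E) :
    fderiv ℝ (fun y ↦ fderiv ℝ f y v) x w = fderiv ℝ (fderiv ℝ f) x w v := by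
  have hdiff : DifferentiableAt ℝ (fderiv ℝ f) x :=
    (hf.fderiv_right (m := 1) (by norm_num)).differentiable one_ne_zero x
  rw [fderiv_clm_apply hdiff (differentiableAt_const v)]
  simp

theorem laplacian_mul_fderiv_eq_sum [FiniteDimensional ℝ E] {ι : Type*} [Fintype ι]
    (b : OrthonormalBasis ι ℝ E) {f : E → ℝ} (hf : ContDiff ℝ 2 f) (e x : E) :
    Δ f x * fderiv ℝ f x e =
      ∑ i, (fderiv ℝ (fun y ↦ fderiv ℝ f y (b i) * fderiv ℝ f y e) x (b i)
        - fderiv ℝ (fun y ↦ fderiv ℝ f y (b i) * fderiv ℝ f y (b i)) x e / 2) := by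
  have hsymm (v w : E) : fderiv ℝ (fderiv ℝ f) x v w = fderiv ℝ (fderiv ℝ f) x w v :=
    hf.contDiffAt.isSymmSndFDerivAt (by simp) v w
  have hdiff (v : E) : DifferentiableAt ℝ (fun y ↦ fderiv ℝ f y v) x :=
    ((hf.fderiv_right (m := 1) (by norm_num)).clm_apply contDiff_const).differentiable
      one_ne_zero x
  rw [laplacian_apply_eq_sum_fderiv b, Finset.sum_mul]
  refine Finset.sum_congr rfl fun i _ ↦ ?_
  simp only [fderiv_fun_mul (hdiff _) (hdiff _), add_apply, smul_apply,
    fderiv_fderiv_apply_const hf, smul_eq_mul, hsymm e]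
  ring

section IntegrationByParts

variable [MeasurableSpace E] [BorelSpace E] {μ : Measure E}

theorem integrable_fderiv_apply [IsFiniteMeasureOnCompacts μ] {u : E → ℝ} (hu : ContDiff ℝ 1 u)
    (hu_supp : HasCompactSupport u) (v : E) : Integrable (fun x ↦ fderiv ℝ u x v) μ :=
  ((hu.continuous_fderiv one_ne_zero).clm_apply continuous_const).integrable_of_hasCompactSupport
    (hu_supp.fderiv_apply ℝ v)

theorem integral_fderiv_apply_eq_zero [FiniteDimensional ℝ E] [μ.IsAddHaarMeasure] {u : E → ℝ}
    (hu : ContDiff ℝ 1 u) (hu_supp : HasCompactSupport u) (v : E) : ∫ x, fderiv ℝ u x v ∂μ = 0 := by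
  simpa using integral_mul_fderiv_eq_neg_fderiv_mul_of_integrable (μ := μ)
    (f := fun _ : E ↦ (1 : ℝ)) (g := u) (v := v) (by simp)
    (by simpa using integrable_fderiv_apply hu hu_supp v)
    (by simpa using hu.continuous.integrable_of_hasCompactSupport hu_supp)
    (fun _ _ ↦ differentiableAt_const _) (fun x _ ↦ hu.differentiable one_ne_zero x)

theorem integral_laplacian_mul_fderiv_eq_zero [FiniteDimensional ℝ E] [μ.IsAddHaarMeasure]
    {f : E → ℝ} (hf : ContDiff ℝ 2 f)
    (hf_supp : HasCompactSupport f) (e : E) : ∫ x, Δ f x * fderiv ℝ f x e ∂μ = 0 := by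
  have hprod (v w : E) : ContDiff ℝ 1 fun x ↦ fderiv ℝ f x v * fderiv ℝ f x w := by
    have hf' : ContDiff ℝ 1 (fderiv ℝ f) := hf.fderiv_right (by norm_num)
    exact (hf'.clm_apply contDiff_const).mul (hf'.clm_apply contDiff_const)
  have hprod_supp (v w : E) : HasCompactSupport fun x ↦ fderiv ℝ f x v * fderiv ℝ f x w :=
    (hf_supp.fderiv_apply ℝ v).mul_right
  have hint (v w z : E) := integrable_fderiv_apply (μ := μ) (hprod v w) (hprod_supp v w) z
  have hzero (v w z : E) := integral_fderiv_apply_eq_zero (μ := μ) (hprod v w) (hprod_supp v w) z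
  simp only [laplacian_mul_fderiv_eq_sum (stdOrthonormalBasis ℝ E) hf]
  refine (integral_finsetSum _ fun i _ ↦ (hint _ _ _).sub ((hint _ _ _).div_const 2)).trans
    (Finset.sum_eq_zero fun i _ ↦ ?_)
  simp only [Pi.sub_apply]
  rw [integral_sub (hint _ _ _) ((hint _ _ _).div_const 2), integral_div, hzero, hzero]
  simp

end IntegrationByParts

/-- The weight `exp (κ ⟨e, y⟩ - |y|² / 8)` of the Carleman estimate: the Gaussian factor removes
the drift of `ou`, the exponential factor in the direction `e` supplies the large parameter `κ`. -/
def carlemanWeight (e : E) (κ : ℝ) (y : E) : ℝ := Real.exp (κ * ⟪e, y⟫ - ‖y‖ ^ 2 / 8)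

theorem carlemanWeight_pos (e : E) (κ : ℝ) (y : E) : 0 < carlemanWeight e κ y := Real.exp_pos _

theorem contDiff_carlemanWeight (e : E) (κ : ℝ) : ContDiff ℝ 2 (carlemanWeight e κ) :=
  ((contDiff_const.mul (contDiff_const.inner ℝ contDiff_id)).sub
    ((contDiff_norm_sq ℝ).div_const 8)).exp

theorem hasDerivAt_carlemanWeight_add_smul (e : E) (κ : ℝ) (x v : E) (t : ℝ) :
    HasDerivAt (fun s : ℝ ↦ carlemanWeight e κ (x + s • v))
      (carlemanWeight e κ (x + t • v) * (⟪κ • e - (4⁻¹ : ℝ) • x, v⟫ - t * (‖v‖ ^ 2 / 4))) t := by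
  have hinner : HasDerivAt (fun s : ℝ ↦ ⟪e, x + s • v⟫) ⟪e, v⟫ t := by
    simpa [inner_add_right, inner_smul_right] using
      ((hasDerivAt_id t).mul_const ⟪e, v⟫).const_add ⟪e, x⟫
  refine (((hinner.const_mul κ).sub
    ((hasDerivAt_norm_sq_add_smul x v t).div_const 8)).exp).congr_deriv ?_
  simp only [carlemanWeight, Pi.sub_apply, inner_sub_left, inner_smul_left, conj_trivial]
  ring

section Conjugation

variable {f : E → ℝ}

theorem hasDerivAt_carlemanWeight_mul_add_smul (hf : ContDiff ℝ 2 f) (e : E) (κ : ℝ) (x v : E)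
    (t : ℝ) : HasDerivAt (fun s : ℝ ↦ carlemanWeight e κ (x + s • v) * f (x + s • v))
      (carlemanWeight e κ (x + t • v) *
        ((⟪κ • e - (4⁻¹ : ℝ) • x, v⟫ - t * (‖v‖ ^ 2 / 4)) * f (x + t • v)
        + fderiv ℝ f (x + t • v) v)) t :=
  ((hasDerivAt_carlemanWeight_add_smul e κ x v t).mul
    (hasDerivAt_comp_add_smul (hf.differentiable two_ne_zero _))).congr_deriv (by ring)

theorem fderiv_carlemanWeight_mul (hf : ContDiff ℝ 2 f) (e : E) (κ : ℝ) (x v : E) :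
    fderiv ℝ (fun y ↦ carlemanWeight e κ y * f y) x v =
    carlemanWeight e κ x * (⟪κ • e - (4⁻¹ : ℝ) • x, v⟫ * f x + fderiv ℝ f x v) := by
  have hline := hasDerivAt_comp_add_smul (f := fun y ↦ carlemanWeight e κ y * f y) (x := x)
    (v := v) (t := 0) (((contDiff_carlemanWeight e κ).mul hf).differentiable two_ne_zero _)
  simpa using hline.unique (hasDerivAt_carlemanWeight_mul_add_smul hf e κ x v 0)

theorem fderiv_fderiv_carlemanWeight_mul (hf : ContDiff ℝ 2 f) (e : E) (κ : ℝ) (x v : E) :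
    fderiv ℝ (fderiv ℝ fun y ↦ carlemanWeight e κ y * f y) x v v =
      carlemanWeight e κ x * (fderiv ℝ (fderiv ℝ f) x v v
        + 2 * (⟪κ • e - (4⁻¹ : ℝ) • x, v⟫ * fderiv ℝ f x v)
        + ⟪κ • e - (4⁻¹ : ℝ) • x, v⟫ ^ 2 * f x - ‖v‖ ^ 2 * (f x / 4)) := by
  refine fderiv_fderiv_apply_self_eq_of_hasDerivAt ((contDiff_carlemanWeight e κ).mul hf)
    (hasDerivAt_carlemanWeight_mul_add_smul hf e κ x v) ?_
  have hslope : HasDerivAt (fun t : ℝ ↦ ⟪κ • e - (4⁻¹ : ℝ) • x, v⟫ - t * (‖v‖ ^ 2 / 4))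
      (-(‖v‖ ^ 2 / 4)) 0 := by
    simpa using ((hasDerivAt_id (0 : ℝ)).mul_const (‖v‖ ^ 2 / 4)).const_sub
      ⟪κ • e - (4⁻¹ : ℝ) • x, v⟫
  refine ((hasDerivAt_carlemanWeight_add_smul e κ x v 0).mul ((hslope.mul
    (hasDerivAt_comp_add_smul (hf.differentiable two_ne_zero _))).add
    (hasDerivAt_fderiv_comp_add_smul hf x v))).congr_deriv ?_
  simp only [Pi.add_apply, Pi.mul_apply, zero_smul, add_zero, zero_mul, sub_zero]
  ring

theorem laplacian_carlemanWeight_mul [FiniteDimensional ℝ E] (hf : ContDiff ℝ 2 f) (e : E) (κ : ℝ)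
    (x : E) :
    Δ (fun y ↦ carlemanWeight e κ y * f y) x = carlemanWeight e κ x * (Δ f x
      + 2 * fderiv ℝ f x (κ • e - (4⁻¹ : ℝ) • x)
      + ‖κ • e - (4⁻¹ : ℝ) • x‖ ^ 2 * f x - finrank ℝ E * (f x / 4)) := by
  let b := stdOrthonormalBasis ℝ E
  set w : E := κ • e - (4⁻¹ : ℝ) • x with hw
  have hexpand : ∑ i, ⟪w, b i⟫ * fderiv ℝ f x (b i) = fderiv ℝ f x w := by
    conv_rhs => rw [← b.sum_repr' w]
    simp [real_inner_comm]
  have hparseval : ∑ i, ⟪w, b i⟫ ^ 2 = ‖w‖ ^ 2 := b.sum_sq_inner_left w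
  simp only [laplacian_apply_eq_sum_fderiv b, fderiv_fderiv_carlemanWeight_mul hf, ← hw,
    ← Finset.mul_sum, Finset.sum_add_distrib, Finset.sum_sub_distrib, ← Finset.sum_mul, hexpand,
    hparseval, b.norm_eq_one, one_pow, Finset.sum_const, Finset.card_univ, Fintype.card_fin,
    nsmul_eq_mul, one_mul]

theorem laplacian_sub_fderiv_add_carlemanWeight_mul [FiniteDimensional ℝ E] (hf : ContDiff ℝ 2 f)
    {e : E} (he : ‖e‖ = 1) (κ : ℝ) (x : E) :
    Δ (fun y ↦ carlemanWeight e κ y * f y) x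
      - 2 * κ * fderiv ℝ (fun y ↦ carlemanWeight e κ y * f y) x e
      + κ ^ 2 * (carlemanWeight e κ x * f x) =
    carlemanWeight e κ x * (ou f x + (‖x‖ ^ 2 / 16 - finrank ℝ E / 4) * f x) := by
  have hnorm : ‖κ • e - (4⁻¹ : ℝ) • x‖ ^ 2 = κ ^ 2 - κ * ⟪e, x⟫ / 2 + ‖x‖ ^ 2 / 16 := by
    rw [norm_sub_sq_real, norm_smul, norm_smul, he, inner_smul_left, inner_smul_right]
    simp only [Real.norm_eq_abs, mul_one, sq_abs, Real.ringHom_apply, norm_inv,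
      mul_pow, inv_pow]
    ring
  rw [laplacian_carlemanWeight_mul hf, fderiv_carlemanWeight_mul hf, hnorm, ou, map_sub, map_smul,
    map_smul, inner_sub_left, inner_smul_left, inner_smul_left, real_inner_self_eq_norm_sq, he,
    real_inner_comm]
  simp only [smul_eq_mul, Real.ringHom_apply, one_pow, mul_one, map_inv₀]
  ring

end Conjugation

theorem fderiv_inner_add_mul_sq {ζ : E → ℝ} {x : E} (hζ : DifferentiableAt ℝ ζ x) (c : ℝ)
    (e v : E) : fderiv ℝ (fun y ↦ (⟪e, y⟫ + c) * ζ y ^ 2) x v =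
      ⟪e, v⟫ * ζ x ^ 2 + 2 * (⟪e, x⟫ + c) * (ζ x * fderiv ℝ ζ x v) := by
  have hmul := (((innerSL ℝ e).hasFDerivAt (x := x)).add_const c).mul (hζ.hasFDerivAt.pow 2)
  refine (congrArg (· v) hmul.fderiv).trans ?_
  simp only [coe_innerSL_apply, Nat.add_one_sub_one, pow_one, nsmul_eq_mul, Nat.cast_ofNat,
    add_apply, smul_apply, smul_eq_mul]
  ring

variable [FiniteDimensional ℝ E]

theorem hasCompactSupport_of_ne_zero_imp_norm_le {f : E → ℝ} {R : ℝ}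
    (hR : ∀ x, f x ≠ 0 → ‖x‖ ≤ R) : HasCompactSupport f :=
  HasCompactSupport.of_support_subset_isCompact (isCompact_closedBall 0 R) fun x hx ↦
    mem_closedBall_zero_iff.2 (hR x hx)

theorem continuous_laplacian {f : E → ℝ} (hf : ContDiff ℝ 2 f) : Continuous (Δ f) := by
  have _ : Continuous (fderiv ℝ (fderiv ℝ f)) :=
    (hf.fderiv_right (m := 1) (by norm_num)).continuous_fderiv one_ne_zero
  rw [funext (laplacian_apply_eq_sum_fderiv (stdOrthonormalBasis ℝ E) f)]
  fun_prop

theorem sq_div_two_le_of_abs_le {z i B D κ K R : ℝ} (hi : |i| * |z| ≤ R * |z|)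
    (hB : |B| ≤ K * |z|) (hκ : (2 * R + K) ^ 2 ≤ 4 * κ) :
    z ^ 2 / 2 ≤ z ^ 2 + (2 * i * z + B) * D + 2 * κ * D ^ 2 := by
  have hcross : -((2 * R + K) * |z| * |D|) ≤ (2 * i * z + B) * D := by
    refine (neg_le_neg ?_).trans (neg_abs_le _)
    rw [abs_mul]
    gcongr
    refine (abs_add_le _ _).trans ?_
    rw [abs_mul, abs_mul, abs_two]
    linarith
  nlinarith [sq_nonneg (|z| - (2 * R + K) * |D|), sq_abs z, sq_abs D,
    mul_le_mul_of_nonneg_right hκ (sq_nonneg D)]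

/- Both `ζ² + 2⟨e,x⟩ ζ ∂ₑζ` and `(Δζ + κ²ζ) ∂ₑζ` have vanishing integral, and for large `κ` their
sum is bounded below by `ζ²/2`. -/
theorem eq_zero_of_abs_laplacian_sub_fderiv_add_le {ζ : E → ℝ} {e : E} {κ K R : ℝ} (he : ‖e‖ = 1)
    (hζ : ContDiff ℝ 2 ζ) (hR : ∀ x, ζ x ≠ 0 → ‖x‖ ≤ R)
    (hζK : ∀ x, |Δ ζ x - 2 * κ * fderiv ℝ ζ x e + κ ^ 2 * ζ x| ≤ K * |ζ x|)
    (hκ : (2 * R + K) ^ 2 ≤ 4 * κ) : ζ = 0 := by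
  borelize E
  have hsupp : HasCompactSupport ζ := hasCompactSupport_of_ne_zero_imp_norm_le hR
  let u (y : E) : ℝ := (⟪e, y⟫ + κ ^ 2 / 2) * ζ y ^ 2
  have hu : ContDiff ℝ 1 u := ((contDiff_const.inner ℝ contDiff_id).add contDiff_const).mul
    ((hζ.of_le (by norm_num)).pow 2)
  have hu_supp : HasCompactSupport u :=
    (hsupp.comp_left (g := fun s ↦ s ^ 2) (zero_pow two_ne_zero)).mul_left
  have hpointwise (x : E) : ζ x ^ 2 / 2 ≤ fderiv ℝ u x e + Δ ζ x * fderiv ℝ ζ x e := by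
    have hinner : |⟪e, x⟫| * |ζ x| ≤ R * |ζ x| := by
      rcases eq_or_ne (ζ x) 0 with hx | hx
      · simp [hx]
      · gcongr
        exact (abs_real_inner_le_norm e x).trans (by simpa [he] using hR x hx)
    rw [fderiv_inner_add_mul_sq (hζ.differentiable two_ne_zero x), real_inner_self_eq_norm_sq, he]
    linarith [sq_div_two_le_of_abs_le (D := fderiv ℝ ζ x e) hinner (hζK x) hκ]
  have hint₁ : Integrable (fun x ↦ fderiv ℝ u x e) := integrable_fderiv_apply hu hu_supp e
  have hint₂ : Integrable (fun x ↦ Δ ζ x * fderiv ℝ ζ x e) :=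
    ((continuous_laplacian hζ).mul ((hζ.continuous_fderiv two_ne_zero).clm_apply
      continuous_const)).integrable_of_hasCompactSupport (hsupp.fderiv_apply ℝ e).mul_left
  have hsq : Continuous fun x ↦ ζ x ^ 2 / 2 := (hζ.continuous.pow 2).div_const 2
  have hsq_supp : HasCompactSupport fun x ↦ ζ x ^ 2 / 2 :=
    hsupp.comp_left (g := fun s ↦ s ^ 2 / 2) (by simp)
  have hnonpos : ∫ x, ζ x ^ 2 / 2 ≤ 0 := calc
    ∫ x, ζ x ^ 2 / 2 ≤ ∫ x, (fderiv ℝ u x e + Δ ζ x * fderiv ℝ ζ x e) :=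
      integral_mono (hsq.integrable_of_hasCompactSupport hsq_supp) (hint₁.add hint₂) hpointwise
    _ = 0 := by
      rw [integral_add hint₁ hint₂, integral_fderiv_apply_eq_zero hu hu_supp,
        integral_laplacian_mul_fderiv_eq_zero hζ hsupp, add_zero]
  by_contra hne
  obtain ⟨x, hx⟩ := Function.ne_iff.1 hne
  exact hnonpos.not_gt (hsq.integral_pos_of_hasCompactSupport_nonneg_nonzero hsq_supp
    (fun y ↦ by positivity) (x := x) (by simpa using hx))

theorem eq_zero_of_abs_ou_le [Nontrivial E] {f : E → ℝ} {K R : ℝ} (hf : ContDiff ℝ 2 f)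
    (hR : ∀ x, f x ≠ 0 → ‖x‖ ≤ R) (hfK : ∀ x, |ou f x| ≤ K * |f x|) : f = 0 := by
  obtain ⟨e, he⟩ := exists_norm_eq E zero_le_one
  let K' : ℝ := K + R ^ 2 / 16 + finrank ℝ E / 4
  let κ : ℝ := (2 * R + K') ^ 2 / 4
  have hpotential (x : E) :
      |ou f x + (‖x‖ ^ 2 / 16 - finrank ℝ E / 4) * f x| ≤ K' * |f x| := by
    have hcoeff : |‖x‖ ^ 2 / 16 - finrank ℝ E / 4| * |f x|
        ≤ (R ^ 2 / 16 + finrank ℝ E / 4) * |f x| := by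
      rcases eq_or_ne (f x) 0 with hx | hx
      · simp [hx]
      · have hxR : ‖x‖ ^ 2 ≤ R ^ 2 := by gcongr; exact hR x hx
        gcongr
        rw [abs_le]
        constructor <;> nlinarith [sq_nonneg ‖x‖, (finrank ℝ E).cast_nonneg (α := ℝ)]
    refine (abs_add_le _ _).trans ?_
    rw [abs_mul]
    simp only [K']
    linarith [hfK x]
  have hzero : (fun y ↦ carlemanWeight e κ y * f y) = 0 := by
    refine eq_zero_of_abs_laplacian_sub_fderiv_add_le (K := K') (κ := κ) he
      ((contDiff_carlemanWeight e κ).mul hf) (fun x hx ↦ hR x (right_ne_zero_of_mul hx))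
      (fun x ↦ ?_) (by simp only [κ]; linarith)
    rw [laplacian_sub_fderiv_add_carlemanWeight_mul hf he, abs_mul, abs_mul,
      abs_of_pos (carlemanWeight_pos e κ x), mul_left_comm]
    exact mul_le_mul_of_nonneg_left (hpotential x) (carlemanWeight_pos e κ x).le
  ext x
  exact (mul_eq_zero.1 (congrFun hzero x)).resolve_left (carlemanWeight_pos e κ x).ne'

theorem IsProfile.abs_ou_le {p M : ℝ} {φ : E → ℝ} (hp : 1 < p) (hφ : IsProfile p φ)
    (hM : ∀ y, |φ y| ≤ M) (y : E) : |ou φ y| ≤ (M ^ (p - 1) + (p - 1)⁻¹) * |φ y| := by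
  have hp' : 0 < p - 1 := sub_pos.2 hp
  have hou : ou φ y = ((p - 1)⁻¹ - |φ y| ^ (p - 1)) * φ y := by linarith [hφ.equation y]
  have hpow : |φ y| ^ (p - 1) ≤ M ^ (p - 1) := Real.rpow_le_rpow (abs_nonneg _) (hM y) hp'.le
  rw [hou, abs_mul]
  gcongr
  refine (abs_sub _ _).trans ?_
  rw [abs_of_pos (inv_pos.2 hp'), abs_of_nonneg (by positivity)]
  linarith

theorem IsProfile.eventually_exists_ne_zero_on_sphere [Nontrivial E] {p M : ℝ} {φ : E → ℝ}
    (hp : 1 < p) (hφ : IsProfile p φ) (hM : ∀ y, |φ y| ≤ M)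
    (hφ_decay : Tendsto φ (cocompact E) (𝓝 0)) (hne : φ ≠ 0) :
    ∀ᶠ R in atTop, ∃ y, ‖y‖ = R ∧ φ y ≠ 0 := by
  filter_upwards [hφ.eventually_eq_zero_of_eq_zero_on_sphere hp hφ_decay] with R hR
  by_contra! hsphere
  refine hne (eq_zero_of_abs_ou_le (R := R) hφ.contDiff (fun y hy ↦ ?_) (hφ.abs_ou_le hp hM))
  by_contra! hlt
  exact hy (hR hsphere y hlt.le)

end UniqueContinuation

section DifferentialInequalities

theorem add_mul_le_of_lt_deriv {f f' : ℝ → ℝ} {a m : ℝ} (hm : 0 ≤ m)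
    (hf : ∀ t, a ≤ t → HasDerivAt f (f' t) t) (hf' : ∀ t, a ≤ t → f a ≤ f t → m < f' t) {t : ℝ}
    (ht : a ≤ t) : f a + m * (t - a) ≤ f t := by
  have hline (s : ℝ) : HasDerivAt (fun s ↦ f a + m * (s - a)) m s := by
    simpa using (((hasDerivAt_id s).sub_const a).const_mul m).const_add (f a)
  refine image_le_of_deriv_right_lt_deriv_boundary' (f := fun s ↦ f a + m * (s - a))
    (f' := fun _ ↦ m) (B' := f') (fun s _ ↦ (hline s).continuousAt.continuousWithinAt)
    (fun s _ ↦ (hline s).hasDerivWithinAt) (by simp)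
    (fun s hs ↦ (hf s hs.1).continuousAt.continuousWithinAt)
    (fun s hs ↦ (hf s hs.1).hasDerivWithinAt) (fun s hs heq ↦ hf' s hs.1 ?_) ⟨ht, le_rfl⟩
  rw [← heq]
  nlinarith [hs.1]

theorem not_bddAbove_of_lt_deriv {f f' : ℝ → ℝ} {a m : ℝ} (hm : 0 < m)
    (hf : ∀ t, a ≤ t → HasDerivAt f (f' t) t) (hf' : ∀ t, a ≤ t → f a ≤ f t → m < f' t) (M : ℝ) :
    ∃ t, a ≤ t ∧ M < f t := by
  have hgrowth : Tendsto (fun t ↦ f a + m * (t - a)) atTop atTop :=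
    tendsto_atTop_add_const_left _ _
      ((tendsto_atTop_add_const_right _ (-a) tendsto_id).const_mul_atTop hm)
  obtain ⟨t, ht, hta⟩ := ((hgrowth.eventually_gt_atTop M).and (eventually_ge_atTop a)).exists
  exact ⟨t, hta, ht.trans_le (add_mul_le_of_lt_deriv hm.le hf hf' hta)⟩

theorem hasDerivAt_div_exp_two_mul (K t : ℝ) :
    HasDerivAt (fun t ↦ K / Real.exp (2 * t)) (-(2 * K / Real.exp (2 * t))) t := by
  have hexp : HasDerivAt (fun t : ℝ ↦ Real.exp (2 * t)) (Real.exp (2 * t) * 2) t := by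
    simpa using ((hasDerivAt_id t).const_mul 2).exp
  refine ((hasDerivAt_const t K).fun_div hexp (Real.exp_pos _).ne').congr_deriv ?_
  field_simp
  ring

theorem antitoneOn_mul_exp_of_deriv_le {h h' : ℝ → ℝ} {K a : ℝ}
    (hh : ∀ t, a ≤ t → HasDerivAt h (h' t) t)
    (hh' : ∀ t, a ≤ t → h' t ≤ 2 * K / Real.exp (2 * t) * h t) :
    AntitoneOn (fun t ↦ h t * Real.exp (K / Real.exp (2 * t))) (Ici a) := by
  have hderiv (t : ℝ) (ht : a ≤ t) := (hh t ht).mul (hasDerivAt_div_exp_two_mul K t).exp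
  refine antitoneOn_of_deriv_nonpos (convex_Ici a)
    (fun t ht ↦ (hderiv t ht).continuousAt.continuousWithinAt)
    (fun t ht ↦ (hderiv t (interior_subset ht)).differentiableAt.differentiableWithinAt)
    fun t ht ↦ ?_
  have hle := hh' t (interior_subset ht)
  refine (hderiv t (interior_subset ht)).deriv.trans_le ?_
  nlinarith [mul_le_mul_of_nonneg_right hle (Real.exp_pos (K / Real.exp (2 * t))).le]

end DifferentialInequalities

/-- The differential system satisfied by the spherical averages of a profile in logarithmic radius:
`h` is the mass, `f` half its derivative, `w` and `g` are the radial and the tangential energy, `b`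
is the strength of the drift, and `q`, `s` are the lower order contributions of the potential. Of
the Cauchy-Schwarz inequality only the consequences `quadratic_nonneg` and `two_mul_abs_sub_le`
are recorded. -/
structure IsFrequencySystem (C M t₀ : ℝ) (b f g h q s w : ℝ → ℝ) : Prop where
  C_nonneg : 0 ≤ C
  le_exp : 8 * C + 16 ≤ Real.exp (2 * t₀)
  hasDerivAt_h : ∀ t, HasDerivAt h (2 * f t) t
  hasDerivAt_f : ∀ t, HasDerivAt f (w t + g t + b t * f t + q t) t
  hasDerivAt_w_sub_g : ∀ t, HasDerivAt (w - g) (2 * (b t * w t + s t)) t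
  g_nonneg : ∀ t, 0 ≤ g t
  h_pos : ∀ t, t₀ ≤ t → 0 < h t
  h_le : ∀ t, t₀ ≤ t → h t ≤ M
  abs_q_le : ∀ t, t₀ ≤ t → |q t| ≤ C * h t
  quadratic_nonneg : ∀ t v, 0 ≤ w t - 2 * v * f t + v ^ 2 * h t
  two_mul_abs_sub_le : ∀ t, t₀ ≤ t → ∀ v ε, 0 < ε →
    2 * |s t - v * q t| ≤ ε * (w t - 2 * v * f t + v ^ 2 * h t) + C ^ 2 * h t / ε
  exp_le_b : ∀ t, t₀ ≤ t → Real.exp (2 * t) / 4 ≤ b t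
  b_le_exp : ∀ t, t₀ ≤ t → b t ≤ Real.exp (2 * t)

namespace IsFrequencySystem

variable {C M t₀ t : ℝ} {b f g h q s w : ℝ → ℝ}

theorem le_exp_of_le (hS : IsFrequencySystem C M t₀ b f g h q s w) (ht : t₀ ≤ t) :
    8 * C + 16 ≤ Real.exp (2 * t) :=
  hS.le_exp.trans (by gcongr)

theorem sixteen_le_exp (hS : IsFrequencySystem C M t₀ b f g h q s w) (ht : t₀ ≤ t) :
    16 ≤ Real.exp (2 * t) := by
  linarith [hS.le_exp_of_le ht, hS.C_nonneg]

theorem div_exp_le_one (hS : IsFrequencySystem C M t₀ b f g h q s w) (ht : t₀ ≤ t) :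
    (8 * C + 8) / Real.exp (2 * t) ≤ 1 :=
  (div_le_one (Real.exp_pos _)).2 (by linarith [hS.le_exp_of_le ht])

theorem two_le_b (hS : IsFrequencySystem C M t₀ b f g h q s w) (ht : t₀ ≤ t) : 2 ≤ b t := by
  linarith [hS.exp_le_b t ht, hS.sixteen_le_exp ht]

theorem f_le (hS : IsFrequencySystem C M t₀ b f g h q s w) (ht : t₀ ≤ t) :
    f t ≤ (8 * C + 8) / Real.exp (2 * t) * h t := by
  by_contra! hlt
  set δ : ℝ := (8 * C + 8) / Real.exp (2 * t)
  have hC := hS.C_nonneg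
  have hδ : 0 < δ := by positivity
  have hδ_le : δ ≤ 1 := hS.div_exp_le_one ht
  have hbδ {τ : ℝ} (hτ : t ≤ τ) : C + 1 ≤ (b τ - 1) * δ := by
    have hexp : Real.exp (2 * t) ≤ Real.exp (2 * τ) := by gcongr
    have hδ_mul : δ * Real.exp (2 * t) = 8 * C + 8 := div_mul_cancel₀ _ (Real.exp_pos _).ne'
    nlinarith [hS.exp_le_b τ (ht.trans hτ)]
  have htrap {τ : ℝ} (hτ : t ≤ τ) : δ * h τ ≤ f τ := by
    have hF := add_mul_le_of_lt_deriv (f := fun τ ↦ f τ - δ * h τ) (a := t) le_rfl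
      (fun τ _ ↦ (hS.hasDerivAt_f τ).sub ((hS.hasDerivAt_h τ).const_mul δ)) (fun τ hτ hle ↦ ?_) hτ
    · simp only [zero_mul, add_zero] at hF
      linarith
    · have hh := hS.h_pos τ (ht.trans hτ)
      have _ : δ * h τ ≤ f τ := by linarith
      have hq := neg_le_of_abs_le (hS.abs_q_le τ (ht.trans hτ))
      have hb : 1 ≤ b τ := by nlinarith [hbδ hτ]
      calc 0 < (C + 1) * h τ - C * h τ := by linarith
        _ ≤ (b τ - 1) * f τ - C * h τ := by nlinarith [hbδ hτ]
        _ ≤ -δ ^ 2 * h τ + b τ * f τ - C * h τ := by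
          nlinarith [mul_nonneg (sub_nonneg.2 hδ_le) (mul_pos hδ hh).le]
        _ ≤ w τ + g τ + b τ * f τ + q τ - δ * (2 * f τ) := by
          linarith [hS.quadratic_nonneg τ δ, hS.g_nonneg τ]
  have hmono {τ : ℝ} (hτ : t ≤ τ) (hle : h t ≤ h τ) : δ * h t < 2 * f τ := by
    have := hS.h_pos t ht
    nlinarith [htrap hτ]
  obtain ⟨τ, hτ, hMτ⟩ := not_bddAbove_of_lt_deriv (mul_pos hδ (hS.h_pos t ht))
    (fun τ _ ↦ hS.hasDerivAt_h τ) (fun τ ↦ hmono) M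
  exact hMτ.not_ge (hS.h_le τ (ht.trans hτ))

theorem h_le_three_mul (hS : IsFrequencySystem C M t₀ b f g h q s w) (ht : t₀ ≤ t) {τ : ℝ}
    (hτ : t ≤ τ) : h τ ≤ 3 * h t := by
  have hanti := antitoneOn_mul_exp_of_deriv_le (K := 8 * C + 8)
    (fun τ (_ : t ≤ τ) ↦ hS.hasDerivAt_h τ) fun τ hτ ↦ by
      calc 2 * f τ ≤ 2 * ((8 * C + 8) / Real.exp (2 * τ) * h τ) := by
            gcongr; exact hS.f_le (ht.trans hτ)
        _ = 2 * (8 * C + 8) / Real.exp (2 * τ) * h τ := by ring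
  have hh_pos := hS.h_pos t ht
  have hC := hS.C_nonneg
  have hratio := hS.div_exp_le_one ht
  calc h τ ≤ h τ * Real.exp ((8 * C + 8) / Real.exp (2 * τ)) :=
        le_mul_of_one_le_right (hS.h_pos τ (ht.trans hτ)).le (Real.one_le_exp (by positivity))
    _ ≤ h t * Real.exp ((8 * C + 8) / Real.exp (2 * t)) :=
        hanti self_mem_Ici hτ hτ
    _ ≤ h t * Real.exp 1 := by gcongr
    _ ≤ 3 * h t := by nlinarith [Real.exp_one_lt_d9]

theorem mul_lt_deriv_w_sub_g (hS : IsFrequencySystem C M t₀ b f g h q s w) (ht : t₀ ≤ t)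
    (hlt : (12 * C ^ 2 + 6 * C + 1) * h t < (w - g) t) {τ : ℝ} (hτ : t ≤ τ)
    (hle : (w - g) t ≤ (w - g) τ) : b τ * (w - g) τ < 2 * (b τ * w τ + s τ) := by
  have hb := hS.two_le_b (ht.trans hτ)
  have hh := hS.h_le_three_mul ht hτ
  have hh_pos := hS.h_pos t ht
  have hs : 2 * |s τ| ≤ b τ / 2 * w τ + 3 * C ^ 2 * h t := by
    calc 2 * |s τ| ≤ b τ / 2 * w τ + C ^ 2 * h τ / (b τ / 2) := by
          simpa using hS.two_mul_abs_sub_le τ (ht.trans hτ) 0 (b τ / 2) (by linarith)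
      _ ≤ b τ / 2 * w τ + C ^ 2 * (3 * h t) / (2 / 2) := by gcongr
      _ = b τ / 2 * w τ + 3 * C ^ 2 * h t := by ring
  have hw : (w - g) τ ≤ w τ := by simpa using hS.g_nonneg τ
  have hC := hS.C_nonneg
  have hY : 0 < (w - g) t := lt_trans (by positivity) hlt
  calc b τ * (w - g) τ
      < b τ * (w - g) τ + b τ / 2 * (w - g) t - 3 * C ^ 2 * h t := by nlinarith
    _ ≤ b τ * (w - g) τ + b τ / 2 * (w - g) τ - 3 * C ^ 2 * h t := by gcongr
    _ ≤ b τ * w τ + b τ / 2 * w τ - 3 * C ^ 2 * h t := by gcongr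
    _ ≤ 2 * (b τ * w τ + s τ) := by linarith [neg_abs_le (s τ)]

theorem w_sub_g_le_w_sub_g (hS : IsFrequencySystem C M t₀ b f g h q s w) (ht : t₀ ≤ t)
    (hlt : (12 * C ^ 2 + 6 * C + 1) * h t < (w - g) t) {τ : ℝ} (hτ : t ≤ τ) :
    (w - g) t ≤ (w - g) τ := by
  have hC := hS.C_nonneg
  have hh_pos := hS.h_pos t ht
  have hY : 0 < (w - g) t := lt_trans (by positivity) hlt
  simpa using add_mul_le_of_lt_deriv le_rfl (fun τ _ ↦ hS.hasDerivAt_w_sub_g τ)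
    (fun τ hτ hle ↦ (mul_pos (by linarith [hS.two_le_b (ht.trans hτ)])
      (hY.trans_le hle)).trans (hS.mul_lt_deriv_w_sub_g ht hlt hτ hle)) hτ

/-- As long as `f` is negative, the quotient `f / (w - g)` grows at least linearly. -/
theorem exists_f_nonneg (hS : IsFrequencySystem C M t₀ b f g h q s w) (ht : t₀ ≤ t)
    (hlt : (12 * C ^ 2 + 6 * C + 1) * h t < (w - g) t) : ∃ τ, t ≤ τ ∧ 0 ≤ f τ := by
  by_contra! hneg
  have hC := hS.C_nonneg
  have hh_pos := hS.h_pos t ht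
  have hY {τ : ℝ} (hτ : t ≤ τ) : 0 < (w - g) τ :=
    (lt_trans (by positivity) hlt).trans_le (hS.w_sub_g_le_w_sub_g ht hlt hτ)
  suffices hderiv : ∀ τ, t ≤ τ → 1 / 4 <
      ((w τ + g τ + b τ * f τ + q τ) * (w - g) τ - f τ * (2 * (b τ * w τ + s τ))) /
        (w - g) τ ^ 2 by
    obtain ⟨τ, hτ, hpos⟩ := not_bddAbove_of_lt_deriv (by norm_num)
      (fun τ hτ ↦ (hS.hasDerivAt_f τ).div (hS.hasDerivAt_w_sub_g τ) (hY hτ).ne')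
      (fun τ hτ _ ↦ hderiv τ hτ) 0
    exact hpos.not_ge (div_nonpos_of_nonpos_of_nonneg (hneg τ hτ).le (hY hτ).le)
  intro τ hτ
  have hYt := hS.w_sub_g_le_w_sub_g ht hlt hτ
  have hderiv := hS.mul_lt_deriv_w_sub_g ht hlt hτ hYt
  have hq : (w - g) τ / 2 ≤ w τ + g τ + q τ := by
    have hg : (w - g) τ + 2 * g τ = w τ + g τ := by simp only [Pi.sub_apply]; ring
    nlinarith [neg_le_of_abs_le (hS.abs_q_le τ (ht.trans hτ)), hS.g_nonneg τ,
      mul_le_mul_of_nonneg_left (hS.h_le_three_mul ht hτ) hS.C_nonneg, sq_nonneg C]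
  rw [lt_div_iff₀ (pow_pos (hY hτ) 2)]
  calc 1 / 4 * (w - g) τ ^ 2 < (w - g) τ / 2 * (w - g) τ := by nlinarith [hY hτ]
    _ ≤ (w τ + g τ + q τ) * (w - g) τ := by gcongr; exact (hY hτ).le
    _ = (w τ + g τ + b τ * f τ + q τ) * (w - g) τ - f τ * (b τ * (w - g) τ) := by ring
    _ ≤ _ := sub_le_sub_left (mul_le_mul_of_nonpos_left hderiv.le (hneg τ hτ).le) _

theorem w_sub_g_le (hS : IsFrequencySystem C M t₀ b f g h q s w) (ht : t₀ ≤ t) :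
    (w - g) t ≤ (12 * C ^ 2 + 6 * C + 1) * h t := by
  by_contra! hlt
  obtain ⟨t', ht', hft'⟩ := hS.exists_f_nonneg ht hlt
  have hC := hS.C_nonneg
  have hh_pos := hS.h_pos t ht
  have hderiv (τ : ℝ) (hτ : t' ≤ τ) (hle : f t' ≤ f τ) : h t < w τ + g τ + b τ * f τ + q τ := by
    have htτ := ht'.trans hτ
    have hf : 0 ≤ b τ * f τ :=
      mul_nonneg (by linarith [hS.two_le_b (ht.trans htτ)]) (hft'.trans hle)
    have hg : (w - g) τ + 2 * g τ = w τ + g τ := by simp only [Pi.sub_apply]; ring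
    nlinarith [neg_le_of_abs_le (hS.abs_q_le τ (ht.trans htτ)), hS.g_nonneg τ,
      mul_le_mul_of_nonneg_left (hS.h_le_three_mul ht htτ) hS.C_nonneg, sq_nonneg C,
      hS.w_sub_g_le_w_sub_g ht hlt htτ]
  obtain ⟨τ, hτ, hMτ⟩ := not_bddAbove_of_lt_deriv hh_pos
    (fun τ _ ↦ hS.hasDerivAt_f τ) hderiv M
  have hhτ := hS.h_pos τ (ht.trans (ht'.trans hτ))
  refine hMτ.not_ge ?_
  calc f τ ≤ (8 * C + 8) / Real.exp (2 * τ) * h τ := hS.f_le (ht.trans (ht'.trans hτ))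
    _ ≤ 1 * h τ := by gcongr; exact hS.div_exp_le_one (ht.trans (ht'.trans hτ))
    _ ≤ M := (one_mul _).trans_le (hS.h_le τ (ht.trans (ht'.trans hτ)))

/-- The normalised defect in the Cauchy-Schwarz inequality `f ^ 2 ≤ h * w`. -/
def defect (f h w : ℝ → ℝ) (t : ℝ) : ℝ := w t / h t - (f t / h t) ^ 2

/-- The energy per unit mass in excess of the square of the frequency `f / h`. -/
def energy (f g h w : ℝ → ℝ) (t : ℝ) : ℝ := (w - g) t / h t - (f t / h t) ^ 2

/-- The energy, corrected by a summable term which makes it monotone. -/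
def monotoneEnergy (C : ℝ) (f g h w : ℝ → ℝ) (t : ℝ) : ℝ :=
  energy f g h w t - 4 * C ^ 2 / Real.exp (2 * t)

theorem defect_nonneg (hS : IsFrequencySystem C M t₀ b f g h q s w) (ht : t₀ ≤ t) :
    0 ≤ defect f h w t := by
  have hh := hS.h_pos t ht
  have hq := hS.quadratic_nonneg t (f t / h t)
  have heq : defect f h w t = (w t - 2 * (f t / h t) * f t + (f t / h t) ^ 2 * h t) / h t := by
    unfold defect
    field_simp
    ring
  exact heq ▸ div_nonneg hq hh.le

theorem hasDerivAt_frequency (hS : IsFrequencySystem C M t₀ b f g h q s w) (ht : t₀ ≤ t) :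
    HasDerivAt (fun t ↦ f t / h t)
      (b t * (f t / h t) + 2 * defect f h w t - energy f g h w t - (f t / h t) ^ 2 + q t / h t)
      t := by
  have hh := (hS.h_pos t ht).ne'
  refine ((hS.hasDerivAt_f t).div (hS.hasDerivAt_h t) hh).congr_deriv ?_
  simp only [defect, energy, Pi.sub_apply]
  field_simp
  ring

theorem hasDerivAt_energy (hS : IsFrequencySystem C M t₀ b f g h q s w) (ht : t₀ ≤ t) :
    HasDerivAt (energy f g h w) (2 * (b t - 2 * (f t / h t)) * defect f h w t +
      2 * (s t - f t / h t * q t) / h t) t := by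
  have hh := (hS.h_pos t ht).ne'
  refine (((hS.hasDerivAt_w_sub_g t).div (hS.hasDerivAt_h t) hh).sub
    ((hS.hasDerivAt_frequency ht).fun_pow 2)).congr_deriv ?_
  simp only [defect, energy, Pi.sub_apply, Nat.cast_ofNat, Nat.add_one_sub_one, pow_one]
  field_simp
  ring

theorem hasDerivAt_monotoneEnergy (hS : IsFrequencySystem C M t₀ b f g h q s w) (ht : t₀ ≤ t) :
    HasDerivAt (monotoneEnergy C f g h w) (2 * (b t - 2 * (f t / h t)) * defect f h w t +
      2 * (s t - f t / h t * q t) / h t + 8 * C ^ 2 / Real.exp (2 * t)) t :=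
  ((hS.hasDerivAt_energy ht).sub (hasDerivAt_div_exp_two_mul (4 * C ^ 2) t)).congr_deriv (by ring)

theorem frequency_le (hS : IsFrequencySystem C M t₀ b f g h q s w) (ht : t₀ ≤ t) :
    f t / h t ≤ Real.exp (2 * t) / 16 := by
  have hE := hS.sixteen_le_exp ht
  have hE' := hS.le_exp_of_le ht
  refine (div_le_iff₀ (hS.h_pos t ht)).2 ((hS.f_le ht).trans
    (mul_le_mul_of_nonneg_right ?_ (hS.h_pos t ht).le))
  rw [div_le_iff₀ (by linarith)]
  nlinarith

theorem mul_defect_le_deriv_monotoneEnergy (hS : IsFrequencySystem C M t₀ b f g h q s w)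
    (ht : t₀ ≤ t) :
    Real.exp (2 * t) / 8 * defect f h w t ≤ 2 * (b t - 2 * (f t / h t)) * defect f h w t +
      2 * (s t - f t / h t * q t) / h t + 8 * C ^ 2 / Real.exp (2 * t) := by
  have hh := hS.h_pos t ht
  set u := f t / h t with hu
  have herror : 2 * |s t - u * q t| ≤
      (Real.exp (2 * t) / 8 * defect f h w t + 8 * C ^ 2 / Real.exp (2 * t)) * h t := by
    refine (hS.two_mul_abs_sub_le t ht u (Real.exp (2 * t) / 8) (by positivity)).trans_eq ?_
    rw [hu, defect]
    field_simp
    ring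
  have herror' : -(Real.exp (2 * t) / 8 * defect f h w t + 8 * C ^ 2 / Real.exp (2 * t)) ≤
      2 * (s t - u * q t) / h t := by
    rw [le_div_iff₀ hh]
    linarith [neg_abs_le (s t - u * q t)]
  nlinarith [hS.defect_nonneg ht, hS.frequency_le ht, hS.exp_le_b t ht]

theorem monotoneOn_monotoneEnergy (hS : IsFrequencySystem C M t₀ b f g h q s w) :
    MonotoneOn (monotoneEnergy C f g h w) (Ici t₀) := by
  refine monotoneOn_of_deriv_nonneg (convex_Ici t₀)
    (fun t ht ↦ (hS.hasDerivAt_monotoneEnergy ht).continuousAt.continuousWithinAt)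
    (fun t ht ↦ (hS.hasDerivAt_monotoneEnergy
      (interior_subset ht)).differentiableAt.differentiableWithinAt) fun t ht ↦ ?_
  have ht' : t₀ ≤ t := interior_subset ht
  rw [(hS.hasDerivAt_monotoneEnergy ht').deriv]
  exact (mul_nonneg (by positivity) (hS.defect_nonneg ht')).trans
    (hS.mul_defect_le_deriv_monotoneEnergy ht')

theorem monotoneEnergy_le_energy (C : ℝ) (f g h w : ℝ → ℝ) (t : ℝ) :
    monotoneEnergy C f g h w t ≤ energy f g h w t :=
  sub_le_self _ (by positivity)

theorem energy_le (hS : IsFrequencySystem C M t₀ b f g h q s w) (ht : t₀ ≤ t) :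
    energy f g h w t ≤ 12 * C ^ 2 + 6 * C + 1 :=
  (sub_le_self _ (sq_nonneg _)).trans ((div_le_iff₀ (hS.h_pos t ht)).2 (hS.w_sub_g_le ht))

theorem exists_abs_monotoneEnergy_le (hS : IsFrequencySystem C M t₀ b f g h q s w) :
    ∃ A, 0 ≤ A ∧ ∀ t, t₀ ≤ t → |monotoneEnergy C f g h w t| ≤ A ∧ -A ≤ energy f g h w t ∧
      |f t / h t| ≤ A := by
  set L := 12 * C ^ 2 + 6 * C + 1
  set K := |monotoneEnergy C f g h w t₀|
  have hK : 0 ≤ K := abs_nonneg _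
  have hL : 1 ≤ L := by have := hS.C_nonneg; nlinarith
  refine ⟨L + K, by positivity, fun t ht ↦ ?_⟩
  have hmono := hS.monotoneOn_monotoneEnergy self_mem_Ici ht ht
  have hle := monotoneEnergy_le_energy C f g h w t
  have hlow : -K ≤ monotoneEnergy C f g h w t := (neg_abs_le _).trans hmono
  have hY : (w - g) t / h t ≤ L := (div_le_iff₀ (hS.h_pos t ht)).2 (hS.w_sub_g_le ht)
  refine ⟨abs_le.2 ⟨by linarith, by linarith [hS.energy_le ht]⟩, by linarith,
    abs_le_of_sq_le_sq ?_ (by linarith)⟩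
  have : (f t / h t) ^ 2 = (w - g) t / h t - energy f g h w t := by rw [energy]; ring
  nlinarith

/-- Subtracting `16 * X / exp (2 * t)`, with `X` the monotone energy, absorbs the unbounded defect
in the equation of the frequency. -/
def correctedFrequency (C : ℝ) (f g h w : ℝ → ℝ) (t : ℝ) : ℝ :=
  f t / h t - 16 / Real.exp (2 * t) * monotoneEnergy C f g h w t

theorem exists_hasDerivAt_correctedFrequency (hS : IsFrequencySystem C M t₀ b f g h q s w) {A : ℝ}
    (hX : |monotoneEnergy C f g h w t| ≤ A) (hX' : -A ≤ energy f g h w t) (ht : t₀ ≤ t) :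
    ∃ v', HasDerivAt (correctedFrequency C f g h w) v' t ∧
      v' ≤ b t * correctedFrequency C f g h w t + (C + 19 * A) := by
  refine ⟨_, (hS.hasDerivAt_frequency ht).sub ((hasDerivAt_div_exp_two_mul 16 t).mul
    (hS.hasDerivAt_monotoneEnergy ht)), ?_⟩
  set E := Real.exp (2 * t) with hE_def
  have hE : 16 ≤ E := hS.sixteen_le_exp ht
  set X := monotoneEnergy C f g h w t with hX_def
  set X' := 2 * (b t - 2 * (f t / h t)) * defect f h w t +
    2 * (s t - f t / h t * q t) / h t + 8 * C ^ 2 / E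
  have hX'_ge : 2 * defect f h w t ≤ 16 / E * X' := by
    have := hS.mul_defect_le_deriv_monotoneEnergy ht
    calc 2 * defect f h w t = 16 / E * (E / 8 * defect f h w t) := by field_simp; ring
      _ ≤ 16 / E * X' := by gcongr
  have hq : q t / h t ≤ C :=
    (div_le_iff₀ (hS.h_pos t ht)).2 ((le_abs_self _).trans (hS.abs_q_le t ht))
  have hA : 0 ≤ A := (abs_nonneg _).trans hX
  have hcorr : 2 * 16 / E * X ≤ 2 * A := by
    calc 2 * 16 / E * X ≤ 2 * 16 / E * A := by gcongr; exact le_of_abs_le hX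
      _ ≤ 2 * 16 / 16 * A := by gcongr
      _ = 2 * A := by ring
  have hdrift : b t * (16 / E * X) ≤ 16 * A := by
    have hbE : b t * (16 / E) ≤ 16 := by
      rw [mul_div_assoc', div_le_iff₀ (by positivity)]
      linarith [hS.b_le_exp t ht]
    have hb : 0 ≤ b t * (16 / E) := mul_nonneg (by linarith [hS.two_le_b ht]) (by positivity)
    nlinarith [le_abs_self X]
  rw [correctedFrequency, ← hX_def, ← hE_def]
  nlinarith [sq_nonneg (f t / h t)]

theorem exists_neg_div_exp_le_correctedFrequency
    (hS : IsFrequencySystem C M t₀ b f g h q s w) :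
    ∃ K, ∀ t, t₀ ≤ t → -K / Real.exp (2 * t) ≤ correctedFrequency C f g h w t := by
  obtain ⟨A, hA, hbound⟩ := hS.exists_abs_monotoneEnergy_le
  have hlower {t : ℝ} (ht : t₀ ≤ t) : -(2 * A) ≤ correctedFrequency C f g h w t := by
    obtain ⟨hX, -, hu⟩ := hbound t ht
    have hE : 16 / Real.exp (2 * t) ≤ 1 := (div_le_one (by positivity)).2 (hS.sixteen_le_exp ht)
    have hE' : 0 ≤ 16 / Real.exp (2 * t) := by positivity
    rw [correctedFrequency]
    nlinarith [abs_le.1 hX, abs_le.1 hu]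
  have hderiv (t : ℝ) (ht : t₀ ≤ t) :=
    hS.exists_hasDerivAt_correctedFrequency (hbound t ht).1 (hbound t ht).2.1 ht
  choose! v' hv' hv'_le using @hderiv
  refine ⟨4 * (C + 19 * A + 1), fun t ht ↦ ?_⟩
  by_contra! hlt
  have hdrop (τ : ℝ) (hτ : t ≤ τ)
      (hle : -correctedFrequency C f g h w t ≤ -correctedFrequency C f g h w τ) :
      1 / 2 < -v' τ := by
    have hE : Real.exp (2 * t) ≤ Real.exp (2 * τ) := by gcongr
    have hK := (lt_div_iff₀ (Real.exp_pos _)).1 hlt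
    have hb : b τ * correctedFrequency C f g h w τ ≤ -(C + 19 * A + 1) := by
      have hC := hS.C_nonneg
      have hv : correctedFrequency C f g h w τ ≤ 0 := by
        nlinarith [Real.exp_pos (2 * t)]
      calc b τ * correctedFrequency C f g h w τ
          ≤ Real.exp (2 * t) / 4 * correctedFrequency C f g h w τ :=
            mul_le_mul_of_nonpos_right (by linarith [hS.exp_le_b τ (ht.trans hτ)]) hv
        _ ≤ -(C + 19 * A + 1) := by nlinarith [Real.exp_pos (2 * t)]
    linarith [hv'_le τ (ht.trans hτ)]
  obtain ⟨τ, hτ, hgt⟩ := not_bddAbove_of_lt_deriv one_half_pos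
    (fun τ hτ ↦ (hv' τ (ht.trans hτ)).fun_neg) hdrop (2 * A)
  linarith [hlower (ht.trans hτ)]

theorem exists_pos_le_h (hS : IsFrequencySystem C M t₀ b f g h q s w) :
    ∃ c, 0 < c ∧ ∀ t, t₀ ≤ t → c ≤ h t := by
  obtain ⟨K, hK⟩ := hS.exists_neg_div_exp_le_correctedFrequency
  obtain ⟨A, -, hbound⟩ := hS.exists_abs_monotoneEnergy_le
  have hfreq {t : ℝ} (ht : t₀ ≤ t) : -(K + 16 * A) / Real.exp (2 * t) ≤ f t / h t := by
    have hX := neg_le_of_abs_le (hbound t ht).1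
    calc -(K + 16 * A) / Real.exp (2 * t)
        = -K / Real.exp (2 * t) + 16 / Real.exp (2 * t) * -A := by ring
      _ ≤ correctedFrequency C f g h w t +
          16 / Real.exp (2 * t) * monotoneEnergy C f g h w t := by gcongr; exact hK t ht
      _ = f t / h t := by rw [correctedFrequency]; ring
  set K' := |K + 16 * A|
  have hanti := antitoneOn_mul_exp_of_deriv_le (K := -K')
    (fun t (_ : t₀ ≤ t) ↦ (hS.hasDerivAt_h t).fun_neg) fun t ht ↦ by
      have hf := (le_div_iff₀ (hS.h_pos t ht)).1 (hfreq ht)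
      have hle : -K' / Real.exp (2 * t) * h t ≤ -(K + 16 * A) / Real.exp (2 * t) * h t := by
        have := hS.h_pos t ht
        gcongr
        exact le_abs_self _
      calc -(2 * f t) ≤ -(2 * (-K' / Real.exp (2 * t) * h t)) := by linarith
        _ = 2 * -K' / Real.exp (2 * t) * -h t := by ring
  refine ⟨h t₀ * Real.exp (-K' / Real.exp (2 * t₀)),
    mul_pos (hS.h_pos t₀ le_rfl) (Real.exp_pos _), fun t ht ↦ ?_⟩
  calc h t₀ * Real.exp (-K' / Real.exp (2 * t₀)) ≤ h t * Real.exp (-K' / Real.exp (2 * t)) := by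
        simpa only [neg_mul, neg_le_neg_iff] using hanti self_mem_Ici ht ht
    _ ≤ h t := mul_le_of_le_one_right (hS.h_pos t ht).le (Real.exp_le_one_iff.2
        (div_nonpos_of_nonpos_of_nonneg (neg_nonpos.2 (abs_nonneg _)) (Real.exp_pos _).le))

end IsFrequencySystem

section SphereIntegral

variable {E : Type*} [NormedAddCommGroup E] [NormedSpace ℝ E] [MeasurableSpace E] {μ : Measure E}
  {F G : E → ℝ}

/-- The integral of `F` over the sphere of radius `r`, normalised to the unit sphere: the factor
`r ^ (dim E - 1)` of the surface measure is left out. -/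
def sphereIntegral (μ : Measure E) (F : E → ℝ) (r : ℝ) : ℝ :=
  ∫ θ : sphere (0 : E) 1, F (r • (θ : E)) ∂μ.toSphere

theorem sphereIntegral_const_mul (c : ℝ) (F : E → ℝ) (r : ℝ) :
    sphereIntegral μ (fun y ↦ c * F y) r = c * sphereIntegral μ F r :=
  integral_const_mul _ _

theorem sphereIntegral_const (c r : ℝ) :
    sphereIntegral μ (fun _ ↦ c) r = c * μ.toSphere.real univ := by
  rw [sphereIntegral, integral_const, smul_eq_mul, mul_comm]

theorem sphereIntegral_congr {r : ℝ} (hr : 0 ≤ r) (hFG : ∀ y, ‖y‖ = r → F y = G y) :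
    sphereIntegral μ F r = sphereIntegral μ G r :=
  integral_congr_ae (.of_forall fun θ ↦
    hFG _ (by rw [norm_smul, norm_eq_of_mem_sphere, mul_one, Real.norm_of_nonneg hr]))

variable [BorelSpace E] [FiniteDimensional ℝ E] [μ.IsAddHaarMeasure]

theorem integrable_sphere_comp_smul (hF : Continuous F) (r : ℝ) :
    Integrable (fun θ : sphere (0 : E) 1 ↦ F (r • (θ : E))) μ.toSphere :=
  (hF.comp (continuous_subtype_val.const_smul r)).integrable_of_hasCompactSupport
    (.of_compactSpace _)

theorem sphereIntegral_mono (hF : Continuous F) (hG : Continuous G) {r : ℝ}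
    (hr : 0 ≤ r) (hFG : ∀ y, ‖y‖ = r → F y ≤ G y) :
    sphereIntegral μ F r ≤ sphereIntegral μ G r :=
  integral_mono (integrable_sphere_comp_smul hF r) (integrable_sphere_comp_smul hG r) fun θ ↦
    hFG _ (by rw [norm_smul, norm_eq_of_mem_sphere, mul_one, Real.norm_of_nonneg hr])

theorem sphereIntegral_add (hF : Continuous F) (hG : Continuous G) (r : ℝ) :
    sphereIntegral μ (fun y ↦ F y + G y) r = sphereIntegral μ F r + sphereIntegral μ G r :=
  integral_add (integrable_sphere_comp_smul hF r) (integrable_sphere_comp_smul hG r)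

theorem continuous_sphereIntegral (hF : Continuous F) : Continuous (sphereIntegral μ F) := by
  have hcont : Continuous (Function.uncurry fun (r : ℝ) (θ : sphere (0 : E) 1) ↦ F (r • (θ : E))) :=
    hF.comp (continuous_fst.smul (continuous_subtype_val.comp continuous_snd))
  simpa only [Measure.restrict_univ, sphereIntegral] using!
    continuous_parametric_integral_of_continuous (μ := μ.toSphere) hcont isCompact_univ

theorem sphereIntegral_pos (hF : Continuous F) (hF₀ : 0 ≤ F) {y : E} (hy : y ≠ 0)
    (hFy : F y ≠ 0) : 0 < sphereIntegral μ F ‖y‖ := by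
  have hcont : Continuous fun θ : sphere (0 : E) 1 ↦ F (‖y‖ • (θ : E)) :=
    hF.comp (continuous_subtype_val.const_smul ‖y‖)
  refine hcont.integral_pos_of_hasCompactSupport_nonneg_nonzero (.of_compactSpace _)
    (fun _ ↦ hF₀ _) (x := ⟨‖y‖⁻¹ • y, by simp [norm_smul, hy]⟩) ?_
  simpa [smul_smul, hy] using hFy

theorem hasDerivAt_sphereIntegral_exp (hF : ContDiff ℝ 1 F) (t : ℝ) :
    HasDerivAt (fun t ↦ sphereIntegral μ F (Real.exp t))
      (sphereIntegral μ (fun y ↦ fderiv ℝ F y y) (Real.exp t)) t := by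
  have hcont : Continuous fun y ↦ fderiv ℝ F y y :=
    (hF.continuous_fderiv one_ne_zero).clm_apply continuous_id
  obtain ⟨B, hB⟩ := (isCompact_closedBall (0 : E) (Real.exp (t + 1))).exists_bound_of_continuousOn
    hcont.continuousOn
  have hderiv (θ : E) (s : ℝ) : HasDerivAt (fun s ↦ F (Real.exp s • θ))
      (fderiv ℝ F (Real.exp s • θ) (Real.exp s • θ)) s :=
    ((hF.differentiable one_ne_zero _).hasFDerivAt.comp_hasDerivAt s
      ((Real.hasDerivAt_exp s).smul_const θ))
  refine (hasDerivAt_integral_of_dominated_loc_of_deriv_le (s := Iio (t + 1)) (bound := fun _ ↦ B)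
    (Iio_mem_nhds (lt_add_one t)) (.of_forall fun s ↦
      (integrable_sphere_comp_smul hF.continuous _).aestronglyMeasurable)
    (integrable_sphere_comp_smul hF.continuous _)
    (integrable_sphere_comp_smul hcont _).aestronglyMeasurable
    (.of_forall fun θ s hs ↦ hB _ ?_) (integrable_const B)
    (.of_forall fun θ s _ ↦ hderiv θ s)).2
  simpa [norm_smul] using (mem_Iio.1 hs).le

theorem integrable_sphere_prod (hF : Integrable F μ) :
    Integrable (fun z : sphere (0 : E) 1 × Ioi (0 : ℝ) ↦ F ((z.2 : ℝ) • (z.1 : E)))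
      (μ.toSphere.prod (.volumeIoiPow (finrank ℝ E - 1))) := by
  rw [← μ.measurePreserving_homeomorphUnitSphereProd.integrable_comp_emb
    (Homeomorph.measurableEmbedding _)]
  refine ((integrableOn_iff_comap_subtypeVal (measurableSet_singleton _).compl).1
    (hF.integrableOn (s := {0}ᶜ))).congr (.of_forall fun x ↦ ?_)
  simp [smul_smul, norm_ne_zero_iff.2 x.2]

theorem integral_eq_integral_sphere_prod [Nontrivial E] (F : E → ℝ) :
    ∫ y, F y ∂μ = ∫ z : sphere (0 : E) 1 × Ioi (0 : ℝ), F ((z.2 : ℝ) • (z.1 : E))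
      ∂(μ.toSphere.prod (.volumeIoiPow (finrank ℝ E - 1))) := by
  rw [← μ.measurePreserving_homeomorphUnitSphereProd.integral_comp
    (Homeomorph.measurableEmbedding _)]
  calc ∫ y, F y ∂μ = ∫ x : ({0}ᶜ : Set E), F x ∂μ.comap (↑) := by
        rw [integral_subtype_comap (measurableSet_singleton _).compl, restrict_compl_singleton]
    _ = _ := integral_congr_ae (.of_forall fun x ↦ by
        simp [smul_smul, norm_ne_zero_iff.2 x.2])

theorem integrable_volumeIoiPow_iff {n : ℕ} {g : ℝ → ℝ} :
    Integrable (fun r : Ioi (0 : ℝ) ↦ g r) (.volumeIoiPow n) ↔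
      IntegrableOn (fun r ↦ r ^ n * g r) (Ioi 0) := by
  rw [Measure.volumeIoiPow, integrable_withDensity_iff_integrable_smul' (by fun_prop) (by simp),
    integrableOn_iff_comap_subtypeVal measurableSet_Ioi]
  refine integrable_congr (.of_forall fun ⟨r, hr⟩ ↦ ?_)
  simp [ENNReal.toReal_ofReal (pow_nonneg (mem_Ioi.1 hr).le n)]

theorem integral_volumeIoiPow (n : ℕ) (g : ℝ → ℝ) :
    ∫ r : Ioi (0 : ℝ), g r ∂.volumeIoiPow n = ∫ r in Ioi 0, r ^ n * g r := by
  rw [Measure.volumeIoiPow, integral_withDensity_eq_integral_toReal_smul (by fun_prop) (by simp),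
    ← integral_subtype_comap measurableSet_Ioi fun r ↦ r ^ n * g r]
  refine integral_congr_ae (.of_forall fun ⟨r, hr⟩ ↦ ?_)
  simp [ENNReal.toReal_ofReal (pow_nonneg (mem_Ioi.1 hr).le n)]

theorem integrableOn_pow_mul_sphereIntegral (hF : Integrable F μ) :
    IntegrableOn (fun r ↦ r ^ (finrank ℝ E - 1) * sphereIntegral μ F r) (Ioi 0) :=
  integrable_volumeIoiPow_iff.1 (integrable_sphere_prod hF).integral_prod_right

theorem integral_eq_integral_pow_mul_sphereIntegral [Nontrivial E] (hF : Integrable F μ) :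
    ∫ y, F y ∂μ = ∫ r in Ioi 0, r ^ (finrank ℝ E - 1) * sphereIntegral μ F r := by
  rw [integral_eq_integral_sphere_prod, integral_prod_symm _ (integrable_sphere_prod hF)]
  exact integral_volumeIoiPow _ (sphereIntegral μ F)

end SphereIntegral

section TangentialDivergence

variable {E : Type*} [NormedAddCommGroup E]

/-- The divergence of the vector field `F`. -/
def divergence [NormedSpace ℝ E] (F : E → E) (y : E) : ℝ :=
  LinearMap.trace ℝ E (fderiv ℝ F y : E →ₗ[ℝ] E)

variable [InnerProductSpace ℝ E]

theorem divergence_eq_sum {ι : Type*} [Fintype ι] (b : OrthonormalBasis ι ℝ E) {F : E → E} {y : E}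
    (hF : DifferentiableAt ℝ F y) :
    divergence F y = ∑ i, fderiv ℝ (fun z ↦ ⟪b i, F z⟫) y (b i) := by
  rw [divergence, LinearMap.trace_eq_sum_inner _ b]
  refine Finset.sum_congr rfl fun i _ ↦ ?_
  simp [fderiv_inner_apply ℝ (differentiableAt_const (b i)) hF]

theorem divergence_sub {F G : E → E} {y : E} (hF : DifferentiableAt ℝ F y)
    (hG : DifferentiableAt ℝ G y) :
    divergence (fun z ↦ F z - G z) y = divergence F y - divergence G y := by
  rw [divergence, fderiv_fun_sub hF hG, ContinuousLinearMap.toLinearMap_sub, map_sub, divergence,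
    divergence]

variable [FiniteDimensional ℝ E]

theorem divergence_smul {u : E → ℝ} {F : E → E} {y : E} (hu : DifferentiableAt ℝ u y)
    (hF : DifferentiableAt ℝ F y) :
    divergence (fun z ↦ u z • F z) y = u y * divergence F y + fderiv ℝ u y (F y) := by
  rw [divergence, fderiv_fun_smul hu hF, ContinuousLinearMap.toLinearMap_add, map_add,
    ContinuousLinearMap.toLinearMap_smul, map_smul, smul_eq_mul]
  exact congrArg _ (LinearMap.trace_smulRight (fderiv ℝ u y : E →ₗ[ℝ] ℝ) (F y))

theorem continuous_divergence {F : E → E} (hF : ContDiff ℝ 1 F) : Continuous (divergence F) :=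
  ((LinearMap.trace ℝ E ∘ₗ ContinuousLinearMap.coeLM ℝ).continuous_of_finiteDimensional).comp
    (hF.continuous_fderiv one_ne_zero)

theorem hasCompactSupport_comp_norm_sq {k : ℝ → ℝ} (hk : HasCompactSupport k) :
    HasCompactSupport fun y : E ↦ k (‖y‖ ^ 2) := by
  rw [hasCompactSupport_iff_eventuallyEq, coclosedCompact_eq_cocompact] at hk ⊢
  exact hk.comp_tendsto (((tendsto_pow_atTop two_ne_zero).comp
    tendsto_norm_cocompact_atTop).mono_right atTop_le_cocompact)

theorem eq_zero_of_integral_pow_mul_comp_sq_mul_eq_zero {S : ℝ → ℝ} {n : ℕ} (hS : Continuous S)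
    (hS_int : ∀ k : ℝ → ℝ, ContDiff ℝ 1 k → HasCompactSupport k →
      ∫ s in Ioi 0, s ^ n * (k (s ^ 2) * S s) = 0) {r : ℝ} (hr : 0 < r) : S r = 0 := by
  by_contra hne
  have hnhds : {s | 0 < S √s * S r} ∈ 𝓝 (r ^ 2) := by
    refine ((hS.comp Real.continuous_sqrt).mul_const _).continuousAt.eventually_mem
      (Ioi_mem_nhds ?_)
    simpa [Real.sqrt_sq hr.le] using mul_self_pos.2 hne
  obtain ⟨k, hk_sub, hk_supp, hk, hk_range, hkr⟩ := exists_contDiff_tsupport_subset (n := 1) hnhds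
  let H (s : ℝ) : ℝ := s ^ n * (k (s ^ 2) * S s) * S r
  have hH_cont : Continuous H := ((continuous_pow n).mul
    ((hk.continuous.comp (continuous_pow 2)).mul hS)).mul continuous_const
  have hH_supp : HasCompactSupport H := by
    have hk_sq : HasCompactSupport fun s : ℝ ↦ k (s ^ 2) := by
      simpa using hasCompactSupport_comp_norm_sq (E := ℝ) hk_supp
    exact hk_sq.mul_right.mul_left.mul_right
  have hH_nonneg : ∀ s ∈ Ioi (0 : ℝ), 0 ≤ H s := fun s (hs : 0 < s) ↦ by
    simp only [H, mul_assoc]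
    refine mul_nonneg (pow_nonneg hs.le _) ?_
    rcases eq_or_ne (k (s ^ 2)) 0 with hks | hks
    · rw [hks, zero_mul]
    · have hpos : 0 < S √(s ^ 2) * S r := hk_sub (subset_tsupport k hks)
      rw [Real.sqrt_sq hs.le] at hpos
      exact mul_nonneg (hk_range ⟨_, rfl⟩).1 hpos.le
  have hH_ae : H =ᵐ[volume.restrict (Ioi 0)] 0 := by
    refine (setIntegral_eq_zero_iff_of_nonneg_ae
      ((ae_restrict_mem measurableSet_Ioi).mono hH_nonneg)
      (hH_cont.integrable_of_hasCompactSupport hH_supp).integrableOn).1 ?_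
    rw [integral_mul_const, hS_int k hk hk_supp, zero_mul]
  have hHr : H r = 0 := Measure.eqOn_open_of_ae_eq hH_ae isOpen_Ioi hH_cont.continuousOn
    continuousOn_const (mem_Ioi.2 hr)
  simp [H, hkr, hne, hr.ne'] at hHr

variable [MeasurableSpace E] [BorelSpace E] {μ : Measure E} [μ.IsAddHaarMeasure]

theorem integral_divergence_eq_zero {F : E → E} (hF : ContDiff ℝ 1 F)
    (hF_supp : HasCompactSupport F) : ∫ y, divergence F y ∂μ = 0 := by
  let b := stdOrthonormalBasis ℝ E
  have hcoord (i) : ContDiff ℝ 1 fun y ↦ ⟪b i, F y⟫ := contDiff_const.inner ℝ hF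
  have hcoord_supp (i) : HasCompactSupport fun y ↦ ⟪b i, F y⟫ :=
    hF_supp.comp_left (g := fun v ↦ ⟪b i, v⟫) (inner_zero_right _)
  simp only [divergence_eq_sum b (hF.differentiable one_ne_zero _)]
  rw [integral_finsetSum _ fun i _ ↦ integrable_fderiv_apply (hcoord i) (hcoord_supp i) (b i)]
  exact Finset.sum_eq_zero fun i _ ↦ integral_fderiv_apply_eq_zero (hcoord i) (hcoord_supp i) (b i)

theorem integral_radial_mul_divergence_eq_zero {T : E → E} (hT : ContDiff ℝ 1 T)
    (hT_tan : ∀ y, ⟪y, T y⟫ = 0) {k : ℝ → ℝ} (hk : ContDiff ℝ 1 k) (hk_supp : HasCompactSupport k) :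
    ∫ y, k (‖y‖ ^ 2) * divergence T y ∂μ = 0 := by
  have hradial : ContDiff ℝ 1 fun y : E ↦ k (‖y‖ ^ 2) := hk.comp (contDiff_norm_sq ℝ)
  have htangent (y : E) : fderiv ℝ (fun y : E ↦ k (‖y‖ ^ 2)) y (T y) = 0 := by
    have hcomp := ((hk.differentiable one_ne_zero (‖y‖ ^ 2)).hasFDerivAt.comp y
      (hasStrictFDerivAt_norm_sq y).hasFDerivAt).fderiv
    refine (congrArg (· (T y)) hcomp).trans ?_
    simp [hT_tan]
  rw [← integral_divergence_eq_zero (μ := μ) (F := fun y ↦ k (‖y‖ ^ 2) • T y)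
    (hradial.smul hT) (hasCompactSupport_comp_norm_sq hk_supp).smul_right]
  congr 1 with y
  rw [divergence_smul (hradial.differentiable one_ne_zero y) (hT.differentiable one_ne_zero y),
    htangent, add_zero]

theorem sphereIntegral_eq_zero_of_integral_radial_mul_eq_zero [Nontrivial E] {F : E → ℝ}
    (hF : Continuous F)
    (hF_int : ∀ k : ℝ → ℝ, ContDiff ℝ 1 k → HasCompactSupport k → ∫ y, k (‖y‖ ^ 2) * F y ∂μ = 0)
    {r : ℝ} (hr : 0 < r) : sphereIntegral μ F r = 0 := by
  refine eq_zero_of_integral_pow_mul_comp_sq_mul_eq_zero (n := finrank ℝ E - 1)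
    (continuous_sphereIntegral hF) (fun k hk hk_supp ↦ ?_) hr
  have hint : Integrable (fun y ↦ k (‖y‖ ^ 2) * F y) μ :=
    ((hk.continuous.comp (continuous_norm.pow 2)).mul hF).integrable_of_hasCompactSupport
      (hasCompactSupport_comp_norm_sq hk_supp).mul_right
  refine Eq.trans ?_ (hF_int k hk hk_supp)
  rw [integral_eq_integral_pow_mul_sphereIntegral hint]
  refine setIntegral_congr_fun measurableSet_Ioi fun s (hs : 0 < s) ↦ ?_
  rw [← sphereIntegral_const_mul]
  exact congrArg _ (sphereIntegral_congr hs.le fun y hy ↦ by rw [hy])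

theorem sphereIntegral_divergence_eq_zero [Nontrivial E] {T : E → E} (hT : ContDiff ℝ 1 T)
    (hT_tan : ∀ y, ⟪y, T y⟫ = 0) {r : ℝ} (hr : 0 < r) : sphereIntegral μ (divergence T) r = 0 :=
  sphereIntegral_eq_zero_of_integral_radial_mul_eq_zero (continuous_divergence hT)
    (fun _ ↦ integral_radial_mul_divergence_eq_zero hT hT_tan) hr

theorem sphereIntegral_fderiv_apply_eq_neg [Nontrivial E] {u : E → ℝ} {T : E → E}
    (hu : ContDiff ℝ 1 u) (hT : ContDiff ℝ 1 T) (hT_tan : ∀ y, ⟪y, T y⟫ = 0) {r : ℝ} (hr : 0 < r) :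
    sphereIntegral μ (fun y ↦ fderiv ℝ u y (T y)) r =
      -sphereIntegral μ (fun y ↦ u y * divergence T y) r := by
  have hdiv (y : E) : divergence (fun z ↦ u z • T z) y =
      u y * divergence T y + fderiv ℝ u y (T y) :=
    divergence_smul (hu.differentiable one_ne_zero y) (hT.differentiable one_ne_zero y)
  have hzero := sphereIntegral_divergence_eq_zero (μ := μ) (T := fun z ↦ u z • T z) (hu.smul hT)
    (fun y ↦ by rw [inner_smul_right, hT_tan, mul_zero]) hr
  have hadd := sphereIntegral_add (μ := μ) (F := fun y ↦ u y * divergence T y)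
    (hu.continuous.mul (continuous_divergence hT))
    ((hu.continuous_fderiv one_ne_zero).clm_apply hT.continuous) r
  rw [funext hdiv, hadd] at hzero
  linarith

end TangentialDivergence

section TangentialGradient

variable {E : Type*} [NormedAddCommGroup E]

theorem contDiff_fderiv_apply_self [NormedSpace ℝ E] {f : E → ℝ} (hf : ContDiff ℝ 2 f) :
    ContDiff ℝ 1 fun y ↦ fderiv ℝ f y y :=
  (hf.fderiv_right (by norm_num)).clm_apply contDiff_id

theorem fderiv_fderiv_apply_self [NormedSpace ℝ E] {f : E → ℝ} (hf : ContDiff ℝ 2 f) (y v : E) :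
    fderiv ℝ (fun z ↦ fderiv ℝ f z z) y v = fderiv ℝ f y v + fderiv ℝ (fderiv ℝ f) y v y := by
  rw [fderiv_clm_apply ((hf.fderiv_right (m := 1) (by norm_num)).differentiable one_ne_zero y)
    differentiableAt_fun_id]
  simp

variable [InnerProductSpace ℝ E] [CompleteSpace E] {f : E → ℝ}

theorem contDiff_gradient (hf : ContDiff ℝ 2 f) : ContDiff ℝ 1 (∇ f) :=
  (toDual ℝ E).symm.contDiff.comp (hf.fderiv_right (by norm_num))

theorem inner_fderiv_gradient_apply (hf : ContDiff ℝ 2 f) (y v w : E) :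
    ⟪w, fderiv ℝ (∇ f) y v⟫ = fderiv ℝ (fderiv ℝ f) y v w := by
  have hinner : (fun z ↦ ⟪w, ∇ f z⟫) = fun z ↦ fderiv ℝ f z w := by
    ext z
    rw [real_inner_comm, inner_gradient_left]
  have hfderiv := fderiv_inner_apply ℝ (differentiableAt_const w)
    ((contDiff_gradient hf).differentiable one_ne_zero y) v
  rw [hinner, fderiv_fderiv_apply_const hf] at hfderiv
  simpa using hfderiv.symm

/-- The component of the gradient of `f` tangent to the spheres centred at the origin, multiplied by
`|y|²` so that it is smooth there. -/
def tangentialGradient (f : E → ℝ) (y : E) : E := ‖y‖ ^ 2 • ∇ f y - fderiv ℝ f y y • y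

theorem contDiff_tangentialGradient (hf : ContDiff ℝ 2 f) :
    ContDiff ℝ 1 (tangentialGradient f) :=
  ((contDiff_norm_sq ℝ).smul (contDiff_gradient hf)).sub
    ((contDiff_fderiv_apply_self hf).smul contDiff_id)

theorem inner_tangentialGradient (f : E → ℝ) (y : E) : ⟪y, tangentialGradient f y⟫ = 0 := by
  rw [tangentialGradient, inner_sub_right, inner_smul_right, inner_smul_right,
    real_inner_self_eq_norm_sq, real_inner_comm, inner_gradient_left]
  ring

theorem fderiv_tangentialGradient (f : E → ℝ) (y : E) :
    fderiv ℝ f y (tangentialGradient f y) = ‖y‖ ^ 2 * ‖∇ f y‖ ^ 2 - fderiv ℝ f y y ^ 2 := by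
  have hgrad : fderiv ℝ f y (∇ f y) = ‖∇ f y‖ ^ 2 := by
    rw [← inner_gradient_left, real_inner_self_eq_norm_sq]
  rw [tangentialGradient, map_sub, map_smul, map_smul, hgrad, smul_eq_mul, smul_eq_mul,
    sq (fderiv ℝ f y y)]

theorem contDiff_fderiv_tangentialGradient (hf : ContDiff ℝ 2 f) :
    ContDiff ℝ 1 fun y ↦ fderiv ℝ f y (tangentialGradient f y) :=
  (hf.fderiv_right (by norm_num)).clm_apply (contDiff_tangentialGradient hf)

theorem fderiv_tangentialGradient_nonneg (f : E → ℝ) (y : E) :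
    0 ≤ fderiv ℝ f y (tangentialGradient f y) := by
  have hcauchy : |fderiv ℝ f y y| ≤ ‖∇ f y‖ * ‖y‖ := by
    rw [← inner_gradient_left]
    exact abs_real_inner_le_norm _ _
  rw [fderiv_tangentialGradient, sub_nonneg, ← mul_pow, mul_comm ‖y‖, ← sq_abs (fderiv ℝ f y y)]
  gcongr

theorem fderiv_fderiv_tangentialGradient (hf : ContDiff ℝ 2 f) (y : E) :
    fderiv ℝ (fun z ↦ fderiv ℝ f z (tangentialGradient f z)) y y =
      2 * fderiv ℝ (fun z ↦ fderiv ℝ f z z) y (tangentialGradient f y) := by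
  have hgrad : DifferentiableAt ℝ (∇ f) y := (contDiff_gradient hf).differentiable one_ne_zero y
  have hradial : DifferentiableAt ℝ (fun z ↦ fderiv ℝ f z z) y :=
    (contDiff_fderiv_apply_self hf).differentiable one_ne_zero y
  have hsymm : fderiv ℝ (fderiv ℝ f) y (∇ f y) y = fderiv ℝ (fderiv ℝ f) y y (∇ f y) :=
    hf.contDiffAt.isSymmSndFDerivAt (by simp) _ _
  have hderiv := (((hasStrictFDerivAt_norm_sq y).hasFDerivAt.mul hgrad.hasFDerivAt.norm_sq).sub
    (hradial.hasFDerivAt.pow 2)).fderiv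
  rw [funext (fderiv_tangentialGradient f), fderiv_fderiv_apply_self hf,
    fderiv_tangentialGradient f]
  refine (congrArg (· y) hderiv).trans ?_
  simp only [Nat.add_one_sub_one, pow_one, nsmul_eq_mul, Nat.cast_ofNat, sub_apply, add_apply,
    smul_apply, ContinuousLinearMap.comp_apply, coe_innerSL_apply, inner_fderiv_gradient_apply hf,
    smul_eq_mul, real_inner_self_eq_norm_sq, fderiv_fderiv_apply_self hf, tangentialGradient,
    map_sub, map_smul, hsymm]
  ring

end TangentialGradient

section TangentialGradientDivergence

variable {E : Type*} [NormedAddCommGroup E] [InnerProductSpace ℝ E] [FiniteDimensional ℝ E]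
  {f : E → ℝ}

theorem divergence_gradient (hf : ContDiff ℝ 2 f) (y : E) : divergence (∇ f) y = Δ f y := by
  rw [divergence, LinearMap.trace_eq_sum_inner _ (stdOrthonormalBasis ℝ E),
    laplacian_apply_eq_sum_fderiv (stdOrthonormalBasis ℝ E)]
  exact Finset.sum_congr rfl fun i _ ↦ inner_fderiv_gradient_apply hf y _ _

theorem divergence_tangentialGradient (hf : ContDiff ℝ 2 f) (y : E) :
    divergence (tangentialGradient f) y = ‖y‖ ^ 2 * Δ f y
      - (finrank ℝ E - 2) * fderiv ℝ f y y - fderiv ℝ (fun z ↦ fderiv ℝ f z z) y y := by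
  have hgrad : DifferentiableAt ℝ (∇ f) y := (contDiff_gradient hf).differentiable one_ne_zero y
  have hradial : DifferentiableAt ℝ (fun z ↦ fderiv ℝ f z z) y :=
    (contDiff_fderiv_apply_self hf).differentiable one_ne_zero y
  have hnorm : DifferentiableAt ℝ (fun z : E ↦ ‖z‖ ^ 2) y :=
    (contDiff_norm_sq ℝ).differentiable one_ne_zero y
  have hid : divergence (fun z : E ↦ z) y = finrank ℝ E := by
    rw [divergence, fderiv_fun_id]
    exact LinearMap.trace_id ℝ E
  have hsub : divergence (tangentialGradient f) y = divergence (fun z ↦ ‖z‖ ^ 2 • ∇ f z) y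
      - divergence (fun z ↦ fderiv ℝ f z z • z) y :=
    divergence_sub (hnorm.smul hgrad) (hradial.smul differentiableAt_fun_id)
  rw [hsub, divergence_smul hnorm hgrad, divergence_smul hradial differentiableAt_fun_id, hid,
    divergence_gradient hf, fderiv_norm_sq_apply, smul_apply, innerSL_apply_apply,
    real_inner_comm, inner_gradient_left, nsmul_eq_mul]
  push_cast
  ring

end TangentialGradientDivergence

section LogSphereIntegral

variable {E : Type*} [NormedAddCommGroup E] [NormedSpace ℝ E] [MeasurableSpace E] {μ : Measure E}
  {F G : E → ℝ} {k t : ℝ}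

/-- The spherical integral of `F` over the radius `exp t`, rescaled so as to be of order one when
`F` is quadratic in a function of size `|y| ^ (-k)`. -/
def logSphereIntegral (μ : Measure E) (k : ℝ) (F : E → ℝ) (t : ℝ) : ℝ :=
  Real.exp (2 * k * t) * sphereIntegral μ F (Real.exp t)

theorem logSphereIntegral_const_mul (c : ℝ) (F : E → ℝ) :
    logSphereIntegral μ k (fun y ↦ c * F y) t = c * logSphereIntegral μ k F t := by
  rw [logSphereIntegral, sphereIntegral_const_mul, logSphereIntegral, mul_left_comm]

theorem logSphereIntegral_congr (hFG : ∀ y, ‖y‖ = Real.exp t → F y = G y) :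
    logSphereIntegral μ k F t = logSphereIntegral μ k G t :=
  congrArg _ (sphereIntegral_congr (Real.exp_pos t).le hFG)

variable [BorelSpace E] [FiniteDimensional ℝ E] [μ.IsAddHaarMeasure]

theorem logSphereIntegral_mono (hF : Continuous F) (hG : Continuous G)
    (hFG : ∀ y, ‖y‖ = Real.exp t → F y ≤ G y) :
    logSphereIntegral μ k F t ≤ logSphereIntegral μ k G t :=
  mul_le_mul_of_nonneg_left (sphereIntegral_mono hF hG (Real.exp_pos t).le hFG) (Real.exp_pos _).le

theorem abs_logSphereIntegral_le (hF : Continuous F) (hG : Continuous G)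
    (hFG : ∀ y, ‖y‖ = Real.exp t → |F y| ≤ G y) :
    |logSphereIntegral μ k F t| ≤ logSphereIntegral μ k G t := by
  refine abs_le.2 ⟨?_, logSphereIntegral_mono hF hG fun y hy ↦ (abs_le.1 (hFG y hy)).2⟩
  rw [← neg_one_mul, ← logSphereIntegral_const_mul]
  exact logSphereIntegral_mono (hG.const_mul _) hF fun y hy ↦ by linarith [(abs_le.1 (hFG y hy)).1]

theorem logSphereIntegral_nonneg (hF : Continuous F) (hF₀ : ∀ y, 0 ≤ F y) :
    0 ≤ logSphereIntegral μ k F t := by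
  simpa [logSphereIntegral, sphereIntegral] using
    logSphereIntegral_mono (μ := μ) (k := k) (t := t) continuous_zero hF fun y _ ↦ hF₀ y

theorem logSphereIntegral_add (hF : Continuous F) (hG : Continuous G) :
    logSphereIntegral μ k (fun y ↦ F y + G y) t =
      logSphereIntegral μ k F t + logSphereIntegral μ k G t := by
  simp only [logSphereIntegral, sphereIntegral_add hF hG, mul_add]

theorem hasDerivAt_logSphereIntegral (hF : ContDiff ℝ 1 F) (k t : ℝ) :
    HasDerivAt (logSphereIntegral μ k F)
      (logSphereIntegral μ k (fun y ↦ 2 * k * F y + fderiv ℝ F y y) t) t := by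
  have hexp : HasDerivAt (fun t ↦ Real.exp (2 * k * t)) (Real.exp (2 * k * t) * (2 * k)) t := by
    simpa using ((hasDerivAt_id t).const_mul (2 * k)).exp
  refine (hexp.mul (hasDerivAt_sphereIntegral_exp (μ := μ) hF t)).congr_deriv ?_
  have hradial : Continuous fun y ↦ fderiv ℝ F y y :=
    (hF.continuous_fderiv one_ne_zero).clm_apply continuous_id
  rw [logSphereIntegral_add (hF.continuous.const_mul _) hradial, logSphereIntegral_const_mul,
    logSphereIntegral, logSphereIntegral]
  ring

theorem logSphereIntegral_sub_mul_sq {u v : E → ℝ} (hu : Continuous u) (hv : Continuous v)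
    (c : ℝ) : logSphereIntegral μ k (fun y ↦ (u y - c * v y) ^ 2) t =
      logSphereIntegral μ k (fun y ↦ u y ^ 2) t
        - 2 * c * logSphereIntegral μ k (fun y ↦ v y * u y) t
        + c ^ 2 * logSphereIntegral μ k (fun y ↦ v y ^ 2) t := calc
  _ = logSphereIntegral μ k
        (fun y ↦ u y ^ 2 + (-(2 * c) * (v y * u y) + c ^ 2 * v y ^ 2)) t :=
    logSphereIntegral_congr fun y _ ↦ by ring
  _ = _ := by
    rw [logSphereIntegral_add (by fun_prop) (by fun_prop),
      logSphereIntegral_add (by fun_prop) (by fun_prop), logSphereIntegral_const_mul,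
      logSphereIntegral_const_mul]
    ring

theorem two_mul_abs_logSphereIntegral_mul_sub_le {u v c : E → ℝ} {C : ℝ} (hu : Continuous u)
    (hv : Continuous v) (hc : Continuous c) (hcC : ∀ y, ‖y‖ = Real.exp t → |c y| ≤ C) (a : ℝ)
    {ε : ℝ} (hε : 0 < ε) :
    2 * |logSphereIntegral μ k (fun y ↦ c y * (v y * u y)) t
        - a * logSphereIntegral μ k (fun y ↦ c y * v y ^ 2) t| ≤
      ε * logSphereIntegral μ k (fun y ↦ (u y - a * v y) ^ 2) t
        + C ^ 2 * logSphereIntegral μ k (fun y ↦ v y ^ 2) t / ε := by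
  have hdiff : logSphereIntegral μ k (fun y ↦ 2 * c y * v y * (u y - a * v y)) t =
      2 * (logSphereIntegral μ k (fun y ↦ c y * (v y * u y)) t
        - a * logSphereIntegral μ k (fun y ↦ c y * v y ^ 2) t) := calc
    _ = logSphereIntegral μ k
          (fun y ↦ 2 * (c y * (v y * u y)) + -(2 * a) * (c y * v y ^ 2)) t :=
      logSphereIntegral_congr fun y _ ↦ by ring
    _ = _ := by
      rw [logSphereIntegral_add (by fun_prop) (by fun_prop), logSphereIntegral_const_mul,
        logSphereIntegral_const_mul]
      ring
  calc
    _ = |logSphereIntegral μ k (fun y ↦ 2 * c y * v y * (u y - a * v y)) t| := by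
      rw [hdiff, abs_mul, abs_two]
    _ ≤ logSphereIntegral μ k (fun y ↦ ε * (u y - a * v y) ^ 2 + C ^ 2 / ε * v y ^ 2) t := by
      refine abs_logSphereIntegral_le (by fun_prop) (by fun_prop) fun y hy ↦ ?_
      have hcv : (c y * v y) ^ 2 ≤ C ^ 2 * v y ^ 2 := by
        rw [mul_pow, ← sq_abs (c y)]
        gcongr
        exact hcC y hy
      calc |2 * c y * v y * (u y - a * v y)|
          = 2 * |u y - a * v y| * |c y * v y| := by
            rw [mul_assoc 2 (c y), abs_mul, abs_mul 2, abs_two, mul_right_comm]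
        _ ≤ ε * |u y - a * v y| ^ 2 + ε⁻¹ * |c y * v y| ^ 2 := two_mul_le_add_mul_sq hε
        _ ≤ ε * (u y - a * v y) ^ 2 + C ^ 2 / ε * v y ^ 2 := by
          rw [sq_abs, sq_abs, div_mul_eq_mul_div, div_eq_inv_mul]
          gcongr
    _ = _ := by
      rw [logSphereIntegral_add (by fun_prop) (by fun_prop), logSphereIntegral_const_mul,
        logSphereIntegral_const_mul, div_mul_eq_mul_div]

end LogSphereIntegral

section FrequencyDerivatives

variable {E : Type*} [NormedAddCommGroup E]

/-- The operator `∂ₜ` in the coordinates `y = exp t • θ`, conjugated by `|y| ^ k`. -/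
def shiftedRadialDeriv [NormedSpace ℝ E] (k : ℝ) (f : E → ℝ) (y : E) : ℝ :=
  fderiv ℝ f y y + k * f y

theorem contDiff_shiftedRadialDeriv [NormedSpace ℝ E] {f : E → ℝ} (k : ℝ) (hf : ContDiff ℝ 2 f) :
    ContDiff ℝ 1 (shiftedRadialDeriv k f) :=
  (contDiff_fderiv_apply_self hf).add (contDiff_const.mul (hf.of_le (by norm_num)))

theorem continuous_shiftedRadialDeriv [NormedSpace ℝ E] {f : E → ℝ} (k : ℝ) (hf : ContDiff ℝ 1 f) :
    Continuous (shiftedRadialDeriv k f) :=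
  ((hf.continuous_fderiv one_ne_zero).clm_apply continuous_id).add (hf.continuous.const_mul k)

theorem fderiv_shiftedRadialDeriv [NormedSpace ℝ E] {f : E → ℝ} (k : ℝ) (hf : ContDiff ℝ 2 f)
    (y v : E) : fderiv ℝ (shiftedRadialDeriv k f) y v =
      fderiv ℝ (fun z ↦ fderiv ℝ f z z) y v + k * fderiv ℝ f y v := by
  have hsum := ((contDiff_fderiv_apply_self hf).differentiable one_ne_zero y).hasFDerivAt.add
    ((hf.differentiable two_ne_zero y).hasFDerivAt.const_mul k)
  exact congrArg (· v) hsum.fderiv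

variable [InnerProductSpace ℝ E] [FiniteDimensional ℝ E] {f : E → ℝ}

/-- The Laplacian `∂ₜ² + Δ_S` of the cylinder in the coordinates `y = exp t • θ`, conjugated by
`|y| ^ k`. -/
def shiftedCylinderLaplacian (k : ℝ) (f : E → ℝ) (y : E) : ℝ :=
  shiftedRadialDeriv k (shiftedRadialDeriv k f) y + divergence (tangentialGradient f) y

theorem shiftedCylinderLaplacian_eq (k : ℝ) (hf : ContDiff ℝ 2 f) (y : E) :
    shiftedCylinderLaplacian k f y =
      ‖y‖ ^ 2 * Δ f y + (2 * k - finrank ℝ E + 2) * fderiv ℝ f y y + k ^ 2 * f y := by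
  rw [shiftedCylinderLaplacian, divergence_tangentialGradient hf, shiftedRadialDeriv,
    fderiv_shiftedRadialDeriv k hf, shiftedRadialDeriv]
  ring

variable [MeasurableSpace E] [BorelSpace E] {μ : Measure E} [μ.IsAddHaarMeasure]

theorem hasDerivAt_logSphereIntegral_sq (hf : ContDiff ℝ 1 f) (k t : ℝ) :
    HasDerivAt (logSphereIntegral μ k fun y ↦ f y ^ 2)
      (2 * logSphereIntegral μ k (fun y ↦ f y * shiftedRadialDeriv k f y) t) t := by
  refine (hasDerivAt_logSphereIntegral (hf.pow 2) k t).congr_deriv ?_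
  rw [← logSphereIntegral_const_mul]
  refine logSphereIntegral_congr fun y _ ↦ ?_
  have hsq := congrArg (· y) ((hf.differentiable one_ne_zero y).hasFDerivAt.pow 2).fderiv
  simp only [Nat.add_one_sub_one, pow_one, smul_apply, smul_eq_mul, nsmul_eq_mul] at hsq
  rw [hsq, shiftedRadialDeriv]
  push_cast
  ring

variable [Nontrivial E]

theorem logSphereIntegral_fderiv_tangentialGradient {u : E → ℝ} (hu : ContDiff ℝ 1 u)
    (hf : ContDiff ℝ 2 f) (k t : ℝ) :
    logSphereIntegral μ k (fun y ↦ fderiv ℝ u y (tangentialGradient f y)) t =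
      -logSphereIntegral μ k (fun y ↦ u y * divergence (tangentialGradient f) y) t := by
  rw [logSphereIntegral, sphereIntegral_fderiv_apply_eq_neg hu (contDiff_tangentialGradient hf)
    (inner_tangentialGradient f) (Real.exp_pos t), logSphereIntegral, mul_neg]

theorem logSphereIntegral_mul_shiftedCylinderLaplacian {u : E → ℝ} (hu : ContDiff ℝ 1 u)
    (hf : ContDiff ℝ 2 f) (k t : ℝ) :
    logSphereIntegral μ k (fun y ↦ u y * shiftedCylinderLaplacian k f y) t =
      logSphereIntegral μ k (fun y ↦ u y * shiftedRadialDeriv k (shiftedRadialDeriv k f) y) t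
        - logSphereIntegral μ k (fun y ↦ fderiv ℝ u y (tangentialGradient f y)) t := by
  have hPP : Continuous (shiftedRadialDeriv k (shiftedRadialDeriv k f)) :=
    continuous_shiftedRadialDeriv k (contDiff_shiftedRadialDeriv k hf)
  have hdiv : Continuous (divergence (tangentialGradient f)) :=
    continuous_divergence (contDiff_tangentialGradient hf)
  have hu₀ : Continuous u := hu.continuous
  simp only [shiftedCylinderLaplacian, mul_add]
  rw [logSphereIntegral_add (by fun_prop) (by fun_prop),
    logSphereIntegral_fderiv_tangentialGradient hu hf, sub_neg_eq_add]

theorem hasDerivAt_logSphereIntegral_mul_shiftedRadialDeriv (hf : ContDiff ℝ 2 f) (k t : ℝ) :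
    HasDerivAt (logSphereIntegral μ k fun y ↦ f y * shiftedRadialDeriv k f y)
      (logSphereIntegral μ k (fun y ↦ shiftedRadialDeriv k f y ^ 2) t
        + logSphereIntegral μ k (fun y ↦ fderiv ℝ f y (tangentialGradient f y)) t
        + logSphereIntegral μ k (fun y ↦ f y * shiftedCylinderLaplacian k f y) t) t := by
  have hf₁ : ContDiff ℝ 1 f := hf.of_le (by norm_num)
  have hP : ContDiff ℝ 1 (shiftedRadialDeriv k f) := contDiff_shiftedRadialDeriv k hf
  have hPP : Continuous (shiftedRadialDeriv k (shiftedRadialDeriv k f)) :=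
    continuous_shiftedRadialDeriv k hP
  have hderiv (y : E) : 2 * k * (f y * shiftedRadialDeriv k f y)
      + fderiv ℝ (fun z ↦ f z * shiftedRadialDeriv k f z) y y =
      shiftedRadialDeriv k f y ^ 2 + f y * shiftedRadialDeriv k (shiftedRadialDeriv k f) y := by
    have hPP_eq : shiftedRadialDeriv k (shiftedRadialDeriv k f) y =
      fderiv ℝ (shiftedRadialDeriv k f) y y + k * shiftedRadialDeriv k f y := rfl
    have hP_eq : shiftedRadialDeriv k f y = fderiv ℝ f y y + k * f y := rfl
    rw [fderiv_fun_mul (hf₁.differentiable one_ne_zero y) (hP.differentiable one_ne_zero y),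
      add_apply, smul_apply, smul_apply, smul_eq_mul, smul_eq_mul]
    linear_combination -shiftedRadialDeriv k f y * hP_eq - f y * hPP_eq
  refine (hasDerivAt_logSphereIntegral (hf₁.mul hP) k t).congr_deriv ?_
  have hf₀ : Continuous f := hf.continuous
  have hP₀ : Continuous (shiftedRadialDeriv k f) := hP.continuous
  rw [logSphereIntegral_congr fun y _ ↦ hderiv y, logSphereIntegral_add (by fun_prop)
    (by fun_prop), logSphereIntegral_mul_shiftedCylinderLaplacian hf₁ hf]
  ring

theorem hasDerivAt_logSphereIntegral_sq_sub_tangentialGradient (hf : ContDiff ℝ 2 f) (k t : ℝ) :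
    HasDerivAt ((logSphereIntegral μ k fun y ↦ shiftedRadialDeriv k f y ^ 2)
        - logSphereIntegral μ k fun y ↦ fderiv ℝ f y (tangentialGradient f y))
      (2 * logSphereIntegral μ k
        (fun y ↦ shiftedRadialDeriv k f y * shiftedCylinderLaplacian k f y) t) t := by
  have hP : ContDiff ℝ 1 (shiftedRadialDeriv k f) := contDiff_shiftedRadialDeriv k hf
  have hderiv (y : E) : 2 * k * fderiv ℝ f y (tangentialGradient f y)
      + fderiv ℝ (fun z ↦ fderiv ℝ f z (tangentialGradient f z)) y y =
      2 * fderiv ℝ (shiftedRadialDeriv k f) y (tangentialGradient f y) := by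
    rw [fderiv_fderiv_tangentialGradient hf, fderiv_shiftedRadialDeriv k hf]
    ring
  refine ((hasDerivAt_logSphereIntegral_sq hP k t).sub (hasDerivAt_logSphereIntegral
    (contDiff_fderiv_tangentialGradient hf) k t)).congr_deriv ?_
  rw [logSphereIntegral_congr fun y _ ↦ hderiv y, logSphereIntegral_const_mul,
    logSphereIntegral_mul_shiftedCylinderLaplacian hP hf]
  ring

end FrequencyDerivatives

section ProfileFrequency

variable {E : Type*} [NormedAddCommGroup E] [InnerProductSpace ℝ E] {p t : ℝ} {φ : E → ℝ}

/-- The zeroth-order coefficient of the profile equation in the coordinates `y = exp t • θ` for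
the rescaled unknown `|y| ^ decayRate p * φ y`. -/
def profilePotential (p : ℝ) (φ : E → ℝ) (y : E) : ℝ :=
  decayRate p * (finrank ℝ E - 2) - decayRate p ^ 2 - ‖y‖ ^ 2 * |φ y| ^ (p - 1)

theorem continuous_profilePotential (hp : 1 < p) (hφ : Continuous φ) :
    Continuous (profilePotential p φ) :=
  continuous_const.sub ((continuous_norm.pow 2).mul
    (hφ.abs.rpow_const fun _ ↦ Or.inr (sub_nonneg.2 hp.le)))

theorem abs_profilePotential_le {C : ℝ} (hp : 1 < p) (hC : 0 ≤ C) {y : E} (hy : y ≠ 0)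
    (hdecay : |φ y| ≤ C * ‖y‖ ^ (-decayRate p)) :
    |profilePotential p φ y| ≤
      |decayRate p * (finrank ℝ E - 2) - decayRate p ^ 2| + C ^ (p - 1) := by
  have hp₁ : 0 < p - 1 := sub_pos.2 hp
  have hy₀ : 0 < ‖y‖ := norm_pos_iff.2 hy
  refine (abs_sub _ _).trans (add_le_add_right ?_ _)
  rw [abs_of_nonneg (by positivity)]
  calc ‖y‖ ^ 2 * |φ y| ^ (p - 1)
      ≤ ‖y‖ ^ 2 * (C * ‖y‖ ^ (-decayRate p)) ^ (p - 1) := by gcongr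
    _ = C ^ (p - 1) := by
      rw [Real.mul_rpow hC (by positivity), ← Real.rpow_mul hy₀.le, decayRate, neg_mul, mul_assoc,
        inv_mul_cancel₀ hp₁.ne', mul_one, Real.rpow_neg hy₀.le, Real.rpow_two,
        mul_comm (C ^ (p - 1)), mul_inv_cancel_left₀ (by positivity)]

/-- The first-order coefficient of the profile equation in the coordinates `y = exp t • θ` for
the rescaled unknown `|y| ^ decayRate p * φ y`, in dimension `d`. -/
def profileDrift (p : ℝ) (d : ℕ) (t : ℝ) : ℝ :=
  Real.exp (2 * t) / 2 + 2 * decayRate p - d + 2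

theorem profileDrift_mem_Icc {d : ℕ} {t₀ : ℝ}
    (hdrift : 4 * |2 * decayRate p - d + 2| ≤ Real.exp (2 * t₀)) (ht : t₀ ≤ t) :
    profileDrift p d t ∈ Icc (Real.exp (2 * t) / 4) (Real.exp (2 * t)) := by
  have hexp : Real.exp (2 * t₀) ≤ Real.exp (2 * t) := by gcongr
  rw [profileDrift]
  constructor <;>
    linarith [neg_abs_le (2 * decayRate p - d + 2), le_abs_self (2 * decayRate p - d + 2)]

variable [FiniteDimensional ℝ E]

theorem IsProfile.shiftedCylinderLaplacian_eq (hφ : IsProfile p φ) {y : E}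
    (hy : ‖y‖ = Real.exp t) :
    shiftedCylinderLaplacian (decayRate p) φ y =
      profileDrift p (finrank ℝ E) t * shiftedRadialDeriv (decayRate p) φ y
        + profilePotential p φ y * φ y := by
  have hexp : Real.exp (2 * t) = ‖y‖ ^ 2 := by rw [hy, ← Real.exp_nat_mul, Nat.cast_two]
  have hequation := hφ.equation y
  rw [ou] at hequation
  rw [_root_.shiftedCylinderLaplacian_eq _ hφ.contDiff, profileDrift, profilePotential,
    shiftedRadialDeriv, decayRate, hexp]
  linear_combination ‖y‖ ^ 2 * hequation

variable [MeasurableSpace E] [BorelSpace E] {μ : Measure E} [μ.IsAddHaarMeasure]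

theorem IsProfile.logSphereIntegral_mul_shiftedCylinderLaplacian (hp : 1 < p) (hφ : IsProfile p φ)
    {u : E → ℝ} (hu : Continuous u) (t : ℝ) :
    logSphereIntegral μ (decayRate p)
        (fun y ↦ u y * shiftedCylinderLaplacian (decayRate p) φ y) t =
      profileDrift p (finrank ℝ E) t * logSphereIntegral μ (decayRate p)
          (fun y ↦ u y * shiftedRadialDeriv (decayRate p) φ y) t
        + logSphereIntegral μ (decayRate p) (fun y ↦ profilePotential p φ y * (φ y * u y)) t := by
  have hφ₀ : Continuous φ := hφ.contDiff.continuous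
  have hP : Continuous (shiftedRadialDeriv (decayRate p) φ) :=
    (contDiff_shiftedRadialDeriv _ hφ.contDiff).continuous
  have hc : Continuous (profilePotential p φ) := continuous_profilePotential hp hφ₀
  rw [← logSphereIntegral_const_mul, ← logSphereIntegral_add (by fun_prop) (by fun_prop)]
  exact logSphereIntegral_congr fun y hy ↦ by rw [hφ.shiftedCylinderLaplacian_eq hy]; ring

theorem logSphereIntegral_sq_le {k C R : ℝ} {f : E → ℝ} (hf : Continuous f)
    (hdecay : ∀ y, R ≤ ‖y‖ → |f y| ≤ C * ‖y‖ ^ (-k)) (ht : R ≤ Real.exp t) :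
    logSphereIntegral μ k (fun y ↦ f y ^ 2) t ≤ C ^ 2 * μ.toSphere.real univ := by
  have hpow : (C * Real.exp t ^ (-k)) ^ 2 = Real.exp (-(2 * k * t)) * C ^ 2 := by
    rw [mul_pow, ← Real.exp_mul, ← Real.exp_nat_mul, mul_comm]
    congr 2
    push_cast
    ring
  calc logSphereIntegral μ k (fun y ↦ f y ^ 2) t
      ≤ logSphereIntegral μ k (fun _ ↦ (C * Real.exp t ^ (-k)) ^ 2) t := by
        refine logSphereIntegral_mono (by fun_prop) continuous_const fun y hy ↦ ?_
        rw [← hy, ← sq_abs]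
        gcongr
        exact hdecay y (hy ▸ ht)
    _ = C ^ 2 * μ.toSphere.real univ := by
        rw [logSphereIntegral, sphereIntegral_const, hpow, Real.exp_neg, mul_assoc _⁻¹,
          mul_inv_cancel_left₀ (Real.exp_pos _).ne']

theorem logSphereIntegral_sq_pos {k : ℝ} {f : E → ℝ} (hf : Continuous f)
    (hsphere : ∃ y, ‖y‖ = Real.exp t ∧ f y ≠ 0) :
    0 < logSphereIntegral μ k (fun y ↦ f y ^ 2) t := by
  obtain ⟨y, hy, hfy⟩ := hsphere
  have hy₀ : y ≠ 0 := norm_pos_iff.1 (hy ▸ Real.exp_pos t)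
  exact mul_pos (Real.exp_pos _)
    (hy ▸ sphereIntegral_pos (hf.pow 2) (fun y ↦ sq_nonneg (f y)) hy₀ (pow_ne_zero 2 hfy))

theorem IsProfile.isFrequencySystem [Nontrivial E] {C D t₀ : ℝ} (hp : 1 < p) (hφ : IsProfile p φ)
    (hD₀ : 0 ≤ D) (hD : 8 * D + 16 ≤ Real.exp (2 * t₀))
    (hdrift : 4 * |2 * decayRate p - finrank ℝ E + 2| ≤ Real.exp (2 * t₀))
    (hdecay : ∀ y, Real.exp t₀ ≤ ‖y‖ → |φ y| ≤ C * ‖y‖ ^ (-decayRate p))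
    (hpotential : ∀ y, Real.exp t₀ ≤ ‖y‖ → |profilePotential p φ y| ≤ D)
    (hsphere : ∀ R, Real.exp t₀ ≤ R → ∃ y, ‖y‖ = R ∧ φ y ≠ 0) :
    IsFrequencySystem D (C ^ 2 * μ.toSphere.real univ) t₀ (profileDrift p (finrank ℝ E))
      (logSphereIntegral μ (decayRate p) fun y ↦ φ y * shiftedRadialDeriv (decayRate p) φ y)
      (logSphereIntegral μ (decayRate p) fun y ↦ fderiv ℝ φ y (tangentialGradient φ y))
      (logSphereIntegral μ (decayRate p) fun y ↦ φ y ^ 2)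
      (logSphereIntegral μ (decayRate p) fun y ↦ profilePotential p φ y * φ y ^ 2)
      (logSphereIntegral μ (decayRate p)
        fun y ↦ profilePotential p φ y * (φ y * shiftedRadialDeriv (decayRate p) φ y))
      (logSphereIntegral μ (decayRate p) fun y ↦ shiftedRadialDeriv (decayRate p) φ y ^ 2) := by
  set k := decayRate p
  set P := shiftedRadialDeriv k φ
  have hφ₀ : Continuous φ := hφ.contDiff.continuous
  have hP : Continuous P := (contDiff_shiftedRadialDeriv k hφ.contDiff).continuous
  have hc : Continuous (profilePotential p φ) := continuous_profilePotential hp hφ₀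
  refine
    { C_nonneg := hD₀
      le_exp := hD
      hasDerivAt_h := hasDerivAt_logSphereIntegral_sq (hφ.contDiff.of_le (by norm_num)) k
      hasDerivAt_f := fun t ↦ ?_
      hasDerivAt_w_sub_g := fun t ↦ ?_
      g_nonneg := fun t ↦ logSphereIntegral_nonneg
        (contDiff_fderiv_tangentialGradient hφ.contDiff).continuous
        (fderiv_tangentialGradient_nonneg φ)
      h_pos := fun t ht ↦ logSphereIntegral_sq_pos hφ₀ (hsphere _ (Real.exp_le_exp.2 ht))
      h_le := fun t ht ↦ logSphereIntegral_sq_le hφ₀ hdecay (Real.exp_le_exp.2 ht)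
      abs_q_le := fun t ht ↦ ?_
      quadratic_nonneg := fun t v ↦ ?_
      two_mul_abs_sub_le := fun t ht v ε hε ↦ ?_
      exp_le_b := fun t ht ↦ (profileDrift_mem_Icc hdrift ht).1
      b_le_exp := fun t ht ↦ (profileDrift_mem_Icc hdrift ht).2 }
  · refine (hasDerivAt_logSphereIntegral_mul_shiftedRadialDeriv hφ.contDiff k t).congr_deriv ?_
    simp only [hφ.logSphereIntegral_mul_shiftedCylinderLaplacian hp hφ₀, ← sq, add_assoc, k, P]
  · refine (hasDerivAt_logSphereIntegral_sq_sub_tangentialGradient hφ.contDiff k t).congr_deriv ?_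
    simp only [hφ.logSphereIntegral_mul_shiftedCylinderLaplacian hp hP, ← sq, k, P]
  · rw [← logSphereIntegral_const_mul]
    refine abs_logSphereIntegral_le (by fun_prop) (by fun_prop) fun y hy ↦ ?_
    rw [abs_mul, abs_of_nonneg (sq_nonneg (φ y))]
    exact mul_le_mul_of_nonneg_right
      (hpotential y ((Real.exp_le_exp.2 ht).trans_eq hy.symm)) (sq_nonneg _)
  · rw [← logSphereIntegral_sub_mul_sq hP hφ₀]
    exact logSphereIntegral_nonneg (by fun_prop) fun y ↦ sq_nonneg _
  · rw [← logSphereIntegral_sub_mul_sq hP hφ₀]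
    exact two_mul_abs_logSphereIntegral_mul_sub_le hP hφ₀ hc
      (fun y hy ↦ hpotential y ((Real.exp_le_exp.2 ht).trans_eq hy.symm)) v hε

theorem IsProfile.eventually_le_logSphereIntegral_sq [Nontrivial E] {M : ℝ} (hp : 1 < p)
    (hφ : IsProfile p φ) (hM : ∀ y, |φ y| ≤ M) (hφ_decay : Tendsto φ (cocompact E) (𝓝 0))
    (hne : φ ≠ 0) : ∃ c > 0, ∀ᶠ t in atTop,
      c ≤ logSphereIntegral μ (decayRate p) (fun y ↦ φ y ^ 2) t := by
  obtain ⟨C, hC, R, hdecay⟩ := hφ.exists_abs_le_norm_rpow hp hφ_decay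
  set D := |decayRate p * (finrank ℝ E - 2) - decayRate p ^ 2| + C ^ (p - 1)
  have hexp₂ : Tendsto (fun t : ℝ ↦ Real.exp (2 * t)) atTop atTop :=
    Real.tendsto_exp_atTop.comp (tendsto_id.const_mul_atTop two_pos)
  obtain ⟨t₀, ⟨hD, hdrift⟩, hR, hsphere⟩ := (((hexp₂.eventually_ge_atTop (8 * D + 16)).and
    (hexp₂.eventually_ge_atTop (4 * |2 * decayRate p - finrank ℝ E + 2|))).and
    ((Real.tendsto_exp_atTop.eventually_ge_atTop R).and
      (Real.tendsto_exp_atTop.eventually (eventually_forall_ge_atTop.2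
        (hφ.eventually_exists_ne_zero_on_sphere hp hM hφ_decay hne))))).exists
  have hpotential (y : E) (hy : Real.exp t₀ ≤ ‖y‖) : |profilePotential p φ y| ≤ D :=
    abs_profilePotential_le hp hC.le (norm_pos_iff.1 ((Real.exp_pos _).trans_le hy))
      (hdecay y (hR.trans hy))
  obtain ⟨c, hc, hc_le⟩ := (hφ.isFrequencySystem (μ := μ) hp (by positivity) hD hdrift
    (fun y hy ↦ hdecay y (hR.trans hy)) hpotential hsphere).exists_pos_le_h
  exact ⟨c, hc, (eventually_ge_atTop t₀).mono hc_le⟩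

end ProfileFrequency

section CriticalIntegrability

theorem sq_le_add_mul_rpow {a C δ q : ℝ} (ha : 0 ≤ a) (haC : a ≤ C) (hδ : 0 < δ) (hq : 0 ≤ q) :
    a ^ 2 ≤ δ + C ^ 2 / δ ^ (q / 2) * a ^ q := by
  rcases le_total (a ^ 2) δ with hsmall | hlarge
  · exact hsmall.trans (le_add_of_nonneg_right (by positivity))
  · have hpow : δ ^ (q / 2) ≤ a ^ q := calc
      δ ^ (q / 2) ≤ (a ^ 2) ^ (q / 2) := by gcongr
      _ = a ^ q := by rw [← Real.rpow_natCast_mul ha, Nat.cast_two, mul_div_cancel₀ _ two_ne_zero]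
    calc a ^ 2 ≤ C ^ 2 := by gcongr
      _ = C ^ 2 / δ ^ (q / 2) * δ ^ (q / 2) := (div_mul_cancel₀ _ (by positivity)).symm
      _ ≤ C ^ 2 / δ ^ (q / 2) * a ^ q := by gcongr
      _ ≤ δ + C ^ 2 / δ ^ (q / 2) * a ^ q := le_add_of_nonneg_left hδ.le

variable {E : Type*} [NormedAddCommGroup E] [InnerProductSpace ℝ E] [FiniteDimensional ℝ E]
  [MeasurableSpace E] [BorelSpace E] {μ : Measure E} [μ.IsAddHaarMeasure]

theorem logSphereIntegral_sq_le_add {f : E → ℝ} {k q C δ t : ℝ} (hf : Continuous f) (hq : 0 ≤ q)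
    (hδ : 0 < δ) (hdecay : ∀ y, ‖y‖ = Real.exp t → |f y| ≤ C * ‖y‖ ^ (-k)) :
    logSphereIntegral μ k (fun y ↦ f y ^ 2) t ≤ δ * μ.toSphere.real univ
      + C ^ 2 / δ ^ (q / 2) * logSphereIntegral μ (k * q / 2) (fun y ↦ |f y| ^ q) t := by
  have : Continuous fun y ↦ |f y| ^ q := hf.abs.rpow_const fun _ ↦ Or.inr hq
  have hpointwise (y : E) (hy : ‖y‖ = Real.exp t) : Real.exp (2 * k * t) * f y ^ 2 ≤
      δ + C ^ 2 / δ ^ (q / 2) * (Real.exp (2 * (k * q / 2) * t) * |f y| ^ q) := by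
    have hle : Real.exp (k * t) * |f y| ≤ C := by
      have hdecay_y := hdecay y hy
      rw [hy, ← Real.exp_mul, mul_neg, mul_comm t, Real.exp_neg, ← div_eq_mul_inv,
        le_div_iff₀ (Real.exp_pos _)] at hdecay_y
      rwa [mul_comm]
    have hsq := sq_le_add_mul_rpow (by positivity) hle hδ hq
    rw [mul_pow, sq_abs, Real.mul_rpow (Real.exp_pos _).le (abs_nonneg _), ← Real.exp_nat_mul,
      ← Real.exp_mul] at hsq
    convert hsq using 3
    · push_cast
      ring_nf
    · ring_nf
  calc logSphereIntegral μ k (fun y ↦ f y ^ 2) t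
      = sphereIntegral μ (fun y ↦ Real.exp (2 * k * t) * f y ^ 2) (Real.exp t) := by
        rw [sphereIntegral_const_mul, logSphereIntegral]
    _ ≤ sphereIntegral μ (fun y ↦ δ + C ^ 2 / δ ^ (q / 2) *
          (Real.exp (2 * (k * q / 2) * t) * |f y| ^ q)) (Real.exp t) :=
        sphereIntegral_mono (by fun_prop) (by fun_prop) (Real.exp_pos t).le hpointwise
    _ = _ := by
        rw [sphereIntegral_add continuous_const (by fun_prop), sphereIntegral_const,
          sphereIntegral_const_mul, sphereIntegral_const_mul, logSphereIntegral]

theorem not_integrable_of_le_logSphereIntegral [Nontrivial E] {F : E → ℝ} {c : ℝ} (hc : 0 < c)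
    (hF : ∀ᶠ t in atTop, c ≤ logSphereIntegral μ (finrank ℝ E / 2) F t) : ¬ Integrable F μ := by
  intro hint
  obtain ⟨R, hR, hR₀⟩ := ((eventually_forall_ge_atTop.2
    (Real.tendsto_log_atTop.eventually hF)).and (eventually_gt_atTop 0)).exists
  refine not_integrableOn_Ioi_inv (a := R) ?_
  have hradial := ((integrableOn_pow_mul_sphereIntegral hint).mono_set
    (Ioi_subset_Ioi hR₀.le)).const_mul c⁻¹
  refine hradial.mono' measurable_inv.aestronglyMeasurable
    ((ae_restrict_iff' measurableSet_Ioi).2 (.of_forall fun r (hr : R < r) ↦ ?_))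
  have hr₀ : 0 < r := hR₀.trans hr
  have hlower := hR r hr.le
  rw [logSphereIntegral, mul_div_cancel₀ _ two_ne_zero, Real.exp_nat_mul, Real.exp_log hr₀,
    ← mul_pow_sub_one finrank_pos.ne', mul_assoc] at hlower
  rw [Real.norm_of_nonneg (by positivity), inv_le_iff_one_le_mul₀ hr₀, inv_mul_eq_div,
    div_mul_eq_mul_div, one_le_div hc]
  linarith

theorem IsProfile.tendsto_zero_cocompact_of_integrable_rpow {p q M : ℝ} {φ : E → ℝ} (hp : 1 < p)
    (hφ : IsProfile p φ) (hM : ∀ y, |φ y| ≤ M) (hq : 0 < q)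
    (hint : Integrable (fun y ↦ |φ y| ^ q) μ) : Tendsto φ (cocompact E) (𝓝 0) := by
  have : 0 < p - 1 := sub_pos.2 hp
  have hM₀ : 0 ≤ M := (abs_nonneg _).trans (hM 0)
  have hou (y : E) : |ou φ y| ≤ (M ^ (p - 1) + (p - 1)⁻¹) * M := by
    refine (hφ.abs_ou_le hp hM y).trans ?_
    gcongr
    exact hM y
  obtain ⟨L, hL⟩ := exists_lipschitzWith_of_abs_ou_le hφ.contDiff hM hou
  exact _root_.tendsto_zero_cocompact_of_integrable_rpow hL.uniformContinuous hq hint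

theorem IsProfile.not_integrable_rpow [Nontrivial E] {p M : ℝ} {φ : E → ℝ} (hp : 1 < p)
    (hφ : IsProfile p φ) (hM : ∀ y, |φ y| ≤ M) (hne : φ ≠ 0) :
    ¬ Integrable (fun y ↦ |φ y| ^ (finrank ℝ E * (p - 1) / 2)) μ := by
  intro hint
  set q : ℝ := finrank ℝ E * (p - 1) / 2 with hq_def
  have hp₁ : 0 < p - 1 := sub_pos.2 hp
  have hd : (0 : ℝ) < finrank ℝ E := Nat.cast_pos.2 finrank_pos
  have hq : 0 < q := by positivity
  have hdq : decayRate p * q / 2 = finrank ℝ E / 2 := by rw [decayRate, hq_def]; field_simp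
  have hφ_decay := hφ.tendsto_zero_cocompact_of_integrable_rpow hp hM hq hint
  obtain ⟨C, hC, R, hdecay⟩ := hφ.exists_abs_le_norm_rpow hp hφ_decay
  obtain ⟨c, hc, hc_le⟩ := hφ.eventually_le_logSphereIntegral_sq (μ := μ) hp hM hφ_decay hne
  set S := μ.toSphere.real univ
  have : 0 ≤ S := measureReal_nonneg
  set δ := c / (2 * (S + 1))
  have hδ : 0 < δ := by positivity
  have hδS : δ * S ≤ c / 2 := by
    rw [div_mul_eq_mul_div, div_le_div_iff₀ (by positivity) two_pos]
    nlinarith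
  refine not_integrable_of_le_logSphereIntegral (c := c / 2 / (C ^ 2 / δ ^ (q / 2)))
    (by positivity) ?_ hint
  filter_upwards [hc_le, Real.tendsto_exp_atTop.eventually_ge_atTop R] with t htc htR
  have hupper := logSphereIntegral_sq_le_add (μ := μ) hφ.contDiff.continuous hq.le hδ
    fun y hy ↦ hdecay y (htR.trans_eq hy.symm)
  rw [hdq] at hupper
  rw [div_le_iff₀' (by positivity)]
  linarith

theorem selfsimilar_profile_not_in_critical_Lq_general [Nontrivial E] {p M : ℝ} {φ : E → ℝ}
    (hp : 1 < p) (hφ : IsProfile p φ) (hM : ∀ y, |φ y| ≤ M) (hne : φ ≠ 0) :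
    ∫⁻ y, ENNReal.ofReal (|φ y| ^ (finrank ℝ E * (p - 1) / 2)) ∂μ = ⊤ := by
  have hmeas : AEStronglyMeasurable (fun y ↦ |φ y| ^ (finrank ℝ E * (p - 1) / 2)) μ :=
    (hφ.contDiff.continuous.measurable.abs.pow_const _).aestronglyMeasurable
  by_contra hfinite
  refine hφ.not_integrable_rpow hp hM hne ⟨hmeas, (hasFiniteIntegral_iff_ofReal
    (.of_forall fun y ↦ Real.rpow_nonneg (abs_nonneg _) _)).2 (lt_top_iff_ne_top.2 hfinite)⟩

end CriticalIntegrability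

/-- no nontrivial bounded backward self-similar profile
`Δφ − (y/2)·∇φ + |φ|^{p−1}φ − βφ = 0` belongs to the critical space `L^{q*}(ℝ^N)`,
where `β = 1/(p−1)` and `q* = N(p−1)/2`; i.e. `∫_{ℝ^N} |φ|^{q*} = ∞`. -/
theorem selfsimilar_profile_not_in_critical_Lq
    (N : ℕ) (hN : 1 ≤ N) (p : ℝ) (hp : 1 < p)
    (φ : EuclideanSpace ℝ (Fin N) → ℝ)
    (hreg : ContDiff ℝ 2 φ)
    (hbdd : ∃ C, ∀ y, |φ y| ≤ C)
    (hnontriv : ∃ y, φ y ≠ 0)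
    (heq : ∀ y, lap φ y - (1 / 2) * fderiv ℝ φ y y
        + |φ y| ^ (p - 1) * φ y - (1 / (p - 1)) * φ y = 0) :
    ∫⁻ y, ENNReal.ofReal (|φ y| ^ ((N : ℝ) * (p - 1) / 2)) = ⊤ := by
  have : NeZero N := ⟨by lia⟩
  obtain ⟨M, hM⟩ := hbdd
  obtain ⟨y₀, hy₀⟩ := hnontriv
  have hφ : IsProfile p φ :=
    ⟨hreg, fun y ↦ by rw [ou, ← lap_eq_laplacian hreg]; linear_combination heq y⟩
  simpa using selfsimilar_profile_not_in_critical_Lq_general (μ := volume) hp hφ hM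
    fun h ↦ hy₀ (congrFun h y₀)
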